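/- Let D be an unbounded c-John domain in ℝⁿ, n ≥ 2, and let τ, δ ∈ (0,1) and 1 ≤ p < n/δ be given. Then there is a constant C = C(δ, τ, p, n, c) > 0 such that the fractional Sobolev–Poincaré inequality inf_{a∈ℝ} ∫_D |u(x) − a|^{np/(n−δp)} dx ≤ C |u|_{W^{δ,p}_τ(D)}^{np/(n−δp)} holds for each u in the homogeneous fractional Sobolev space Ẇ^{δ,p}_τ(D). -/

import Mathlib

open MeasureTheory Metric Set
open scoped ENNReal NNReal BigOperators

noncomputable section

/-- Euclidean `n`-space. -/
abbrev Eucl (n : ℕ) : Type := EuclideanSpace ℝ (Fin n)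

/-- `D` is a `c`-John domain (bounded or unbounded): an open connected set such that each
pair of points can be joined by a rectifiable curve, parametrized by arc length
(formalized as a `1`-Lipschitz parametrization on `[0, ℓ]`), along which
`dist(γ t, ∂D) ≥ min{t, ℓ - t}/c`. -/
def IsJohnDomain (n : ℕ) (c : ℝ) (D : Set (Eucl n)) : Prop :=
  IsOpen D ∧ IsConnected D ∧
    ∀ x₁ ∈ D, ∀ x₂ ∈ D, ∃ ℓ : ℝ, 0 ≤ ℓ ∧ ∃ γ : ℝ → Eucl n,
      γ 0 = x₁ ∧ γ ℓ = x₂ ∧ (∀ t ∈ Icc (0:ℝ) ℓ, γ t ∈ D) ∧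
      LipschitzOnWith 1 γ (Icc 0 ℓ) ∧
      ∀ t ∈ Icc (0:ℝ) ℓ, min t (ℓ - t) / c ≤ infDist (γ t) (frontier D)

/-- The ball `B(x, τ·dist(x, ∂G))`; by convention, if `∂G = ∅` (i.e. `G = ℝⁿ`)
it is all of `ℝⁿ`. -/
def tauBall (n : ℕ) (τ : ℝ) (G : Set (Eucl n)) (x : Eucl n) : Set (Eucl n) :=
  {y : Eucl n | edist x y < ENNReal.ofReal τ * EMetric.infEdist x (frontier G)}

/-- The fractional kernel `|u x - u y|^p / |x - y|^(n + δp)` as an extended real. -/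
def fracKernel (n : ℕ) (δ p : ℝ) (u : Eucl n → ℝ) (x y : Eucl n) : ℝ≥0∞ :=
  ENNReal.ofReal (|u x - u y| ^ p / dist x y ^ ((n : ℝ) + δ * p))

/-- The `p`-th power of the seminorm `|u|_{W^{δ,p}_τ(G)}`. -/
def fracEnergyTau (n : ℕ) (δ τ p : ℝ) (G : Set (Eucl n)) (u : Eucl n → ℝ) : ℝ≥0∞ :=
  ∫⁻ x in G, ∫⁻ y in tauBall n τ G x, fracKernel n δ p u x y ∂volume ∂volume

/-- The `p`-th power of the seminorm `|u|_{W^{δ,p}(G)}`. -/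
def fracEnergy (n : ℕ) (δ p : ℝ) (G : Set (Eucl n)) (u : Eucl n → ℝ) : ℝ≥0∞ :=
  ∫⁻ x in G, ∫⁻ y in G, fracKernel n δ p u x y ∂volume ∂volume

/-- The fractional `(δ,p)`-capacity of a compact set `K ⊆ G`:
`inf |u|_{W^{δ,p}(G)}^p` over `u ∈ C₀(G)` with `u ≥ 1` on `K`. -/
def fracCap (n : ℕ) (δ p : ℝ) (K G : Set (Eucl n)) : ℝ≥0∞ :=
  ⨅ (u : Eucl n → ℝ) (_ : Continuous u) (_ : HasCompactSupport u) (_ : tsupport u ⊆ G)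
    (_ : ∀ x ∈ K, 1 ≤ u x), fracEnergy n δ p G u

/-- The fractional `(δ,q,p)`-Hardy inequality holds in `G` with constant `C`. -/
def HasFracHardy (n : ℕ) (δ p q C : ℝ) (G : Set (Eucl n)) : Prop :=
  ∀ u : Eucl n → ℝ, Continuous u → HasCompactSupport u → tsupport u ⊆ G →
    (∫⁻ x in G, ENNReal.ofReal
        (|u x| ^ q / infDist x (frontier G) ^ (q * (δ + n * (1/q - 1/p)))) ∂volume)
      ≤ ENNReal.ofReal C * fracEnergy n δ p G u ^ (q / p)

/-- The closed axis-parallel cube with center `z` and half side length `r`. -/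
def cube (n : ℕ) (z : Eucl n) (r : ℝ) : Set (Eucl n) :=
  {x : Eucl n | ∀ i, |x i - z i| ≤ r}

/-- The quantity `|Q|^(-1-δ/n) ∫_Q |u - u_Q|` for the cube `Q = cube n z r`. -/
def aTerm (n : ℕ) (δ : ℝ) (u : Eucl n → ℝ) (z : Eucl n) (r : ℝ) : ℝ :=
  ((volume (cube n z r)).toReal) ^ (-(1:ℝ) - δ / n) *
    ∫ x in cube n z r, |u x - ⨍ y in cube n z r, u y ∂volume| ∂volume

/-- The seminorm `|u|_{A^{δ,p}_κ(G)}`: the supremum, over families `𝒬` of pairwise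
disjoint cubes `Q` (given by center-halfside pairs) with `κQ ⊆ G`, of the `L^p(G)`
norm of `∑_{Q ∈ 𝒬} (|Q|^(-1-δ/n) ∫_Q |u - u_Q|) χ_Q`. -/
def ASeminorm (n : ℕ) (κ δ p : ℝ) (G : Set (Eucl n)) (u : Eucl n → ℝ) : ℝ≥0∞ :=
  ⨆ (𝒬 : Set (Eucl n × ℝ)) (_ : ∀ c ∈ 𝒬, 0 < c.2 ∧ cube n c.1 (κ * c.2) ⊆ G)
    (_ : ∀ c ∈ 𝒬, ∀ c' ∈ 𝒬, c ≠ c' → cube n c.1 c.2 ∩ cube n c'.1 c'.2 = ∅),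
    (∫⁻ x in G,
        (∑' c : 𝒬, (cube n (c : Eucl n × ℝ).1 (c : Eucl n × ℝ).2).indicator
          (fun _ => ENNReal.ofReal (aTerm n δ u (c : Eucl n × ℝ).1 (c : Eucl n × ℝ).2)) x) ^ p
      ∂volume) ^ (1 / p)

/-- `Q` is a closed dyadic cube in `ℝⁿ`. -/
def IsDyadicCube (n : ℕ) (Q : Set (Eucl n)) : Prop :=
  ∃ (k : ℤ) (z : Fin n → ℤ),
    Q = {x : Eucl n | ∀ i, (z i : ℝ) * (2:ℝ) ^ k ≤ x i ∧ x i ≤ ((z i : ℝ) + 1) * (2:ℝ) ^ k}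

/-- `W` is a Whitney decomposition of the proper open set `G`: a countable family of
closed dyadic cubes with pairwise disjoint interiors whose union is `G`, with
`diam Q ≤ dist(Q, ∂G) ≤ 4 diam Q` for each cube `Q ∈ W`. -/
def IsWhitneyDecomposition (n : ℕ) (G : Set (Eucl n)) (W : Set (Set (Eucl n))) : Prop :=
  W.Countable ∧ (∀ Q ∈ W, IsDyadicCube n Q) ∧ ⋃₀ W = G ∧
    (W.Pairwise fun Q R => interior Q ∩ interior R = ∅) ∧
    ∀ Q ∈ W, (∀ x ∈ Q, Metric.diam Q ≤ infDist x (frontier G)) ∧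
      ∃ x ∈ Q, infDist x (frontier G) ≤ 4 * Metric.diam Q

/-- `lam` is an upper Assouad-type covering exponent for `E`: there is `C > 0` such
that for every `x ∈ E` and all `0 < r < R < 2 diam E`, the set `E ∩ B(x,R)` can be
covered by at most `C (R/r)^lam` balls centered in `E` of radius `r`. -/
def UpperAssouadBound (n : ℕ) (E : Set (Eucl n)) (lam : ℝ) : Prop :=
  ∃ C : ℝ, 0 < C ∧ ∀ x ∈ E, ∀ r R : ℝ, 0 < r → r < R →
    ENNReal.ofReal R < 2 * EMetric.diam E →
    ∃ F : Finset (Eucl n), ↑F ⊆ E ∧ (F.card : ℝ) ≤ C * (R / r) ^ lam ∧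
      E ∩ ball x R ⊆ ⋃ y ∈ F, ball y r

/-- The upper Assouad dimension of `E`. -/
def upperAssouadDim (n : ℕ) (E : Set (Eucl n)) : ℝ :=
  sInf {lam : ℝ | 0 ≤ lam ∧ UpperAssouadBound n E lam}

/-- `lam` is a lower Assouad-type exponent for `E`: there is `C > 0` such that for
every `x ∈ E` and all `0 < r < R < 2 diam E`, at least `C (R/r)^lam` balls centered
in `E` of radius `r` are needed to cover `E ∩ B(x,R)`. -/
def LowerAssouadBound (n : ℕ) (E : Set (Eucl n)) (lam : ℝ) : Prop :=
  ∃ C : ℝ, 0 < C ∧ ∀ x ∈ E, ∀ r R : ℝ, 0 < r → r < R →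
    ENNReal.ofReal R < 2 * EMetric.diam E →
    ∀ F : Finset (Eucl n), ↑F ⊆ E → (E ∩ ball x R ⊆ ⋃ y ∈ F, ball y r) →
      C * (R / r) ^ lam ≤ (F.card : ℝ)

/-- The lower Assouad dimension of `E`. -/
def lowerAssouadDim (n : ℕ) (E : Set (Eucl n)) : ℝ :=
  sSup {lam : ℝ | 0 ≤ lam ∧ LowerAssouadBound n E lam}

end

open MeasureTheory Metric Set
open scoped ENNReal NNReal BigOperators

/-! ### Geometry of unbounded John domains -/

/-- Distance to the boundary. -/
noncomputable def dF {n : ℕ} (D : Set (Eucl n)) (x : Eucl n) : ℝ := infDist x (frontier D)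

/-- A curve starting at `x` that moves away from the boundary linearly. -/
def HalfCurve {n : ℕ} (c : ℝ) (D : Set (Eucl n)) (x : Eucl n) (z : ℝ → Eucl n) (S : ℝ) : Prop :=
  (∀ σ ∈ Icc 0 S, z σ ∈ D ∧ σ ≤ 3 * c * dF D (z σ)) ∧
  (∀ σ ∈ Icc 0 S, ∀ σ' ∈ Icc 0 S, dist (z σ) (z σ') ≤ |σ - σ'|) ∧
  (∀ σ ≤ dF D x, z σ = x) ∧ dF D x ≤ S

theorem dF_nonneg {n : ℕ} (D : Set (Eucl n)) (x : Eucl n) : 0 ≤ dF D x := infDist_nonneg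

theorem dF_le {n : ℕ} (D : Set (Eucl n)) (x y : Eucl n) : dF D x ≤ dF D y + dist x y :=
  infDist_le_infDist_add_dist

theorem frontier_ne {n : ℕ} {c : ℝ} (hc : 1 ≤ c) {D : Set (Eucl n)} (hD : IsJohnDomain n c D)
    (hb : ¬ Bornology.IsBounded D) : (frontier D).Nonempty := by
  by_contra h
  rw [not_nonempty_iff_eq_empty] at h
  apply hb
  have : D.Subsingleton := by
    intro x hx y hy
    obtain ⟨l, hl, γ, h0, h1, -, -, h2⟩ := hD.2.2 x hx y hy
    have := h2 (l/2) ⟨by linarith, by linarith⟩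
    rw [h, infDist_empty] at this
    have h3 : min (l/2) (l - l/2) = l/2 := by rw [min_eq_left]; linarith
    rw [h3] at this
    have hl0 : l = 0 := by
      by_contra hne
      have : 0 < l / 2 / c := by positivity
      linarith
    rw [← h0, ← h1, hl0]
  exact this.finite.isBounded

theorem dF_pos {n : ℕ} {D : Set (Eucl n)} (ho : IsOpen D) (hf : (frontier D).Nonempty)
    {x : Eucl n} (hx : x ∈ D) : 0 < dF D x := by
  have := (isClosed_frontier (s := D)).notMem_iff_infDist_pos hf (x := x)
  apply this.1
  intro h
  rw [ho.frontier_eq] at h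
  exact h.2 hx

theorem ball_subD {n : ℕ} {D : Set (Eucl n)} (ho : IsOpen D)
    {x : Eucl n} (hx : x ∈ D) {r : ℝ} (hr0 : 0 < r) (hr : r ≤ dF D x) : ball x r ⊆ D := by
  apply IsPreconnected.subset_of_closure_inter_subset (convex_ball x r).isPreconnected ho
  · exact ⟨x, mem_ball_self hr0, hx⟩
  · rintro y ⟨hy, hyr⟩
    by_contra hyD
    have hyf : y ∈ frontier D := by rw [ho.frontier_eq]; exact ⟨hy, hyD⟩
    have := infDist_le_dist_of_mem (x := x) hyf
    rw [mem_ball, dist_comm] at hyr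
    unfold dF at hr
    linarith

theorem mem_tauBall {n : ℕ} {τ : ℝ} (hτ : 0 < τ) {D : Set (Eucl n)} (hf : (frontier D).Nonempty)
    {x y : Eucl n} (h : dist x y < τ * dF D x) : y ∈ tauBall n τ D x := by
  unfold tauBall
  simp only [mem_ofPred_eq]
  have : Metric.infEDist x (frontier D) = ENNReal.ofReal (dF D x) := by
    unfold dF infDist
    rw [ENNReal.ofReal_toReal (infEDist_ne_top hf)]
  change edist x y < ENNReal.ofReal τ * Metric.infEDist x (frontier D)
  rw [this, ← ENNReal.ofReal_mul hτ.le, edist_dist]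
  exact (ENNReal.ofReal_lt_ofReal_iff (lt_of_le_of_lt dist_nonneg h)).2 h

theorem half_of_curve {n : ℕ} {c : ℝ} (hc : 1 ≤ c) {D : Set (Eucl n)} {x : Eucl n} {m : ℝ}
    (hm : 0 ≤ m) {γ : ℝ → Eucl n} (h0 : γ 0 = x) (hD : ∀ t ∈ Icc 0 m, γ t ∈ D)
    (hL : ∀ t ∈ Icc 0 m, ∀ s ∈ Icc 0 m, dist (γ t) (γ s) ≤ |t - s|)
    (hd : ∀ t ∈ Icc 0 m, t / c ≤ dF D (γ t)) :
    HalfCurve c D x (fun σ => γ (max (σ - dF D x) 0)) (dF D x + m) := by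
  have hdx := dF_nonneg D x
  have key : ∀ σ ∈ Icc 0 (dF D x + m), max (σ - dF D x) 0 ∈ Icc 0 m := by
    intro σ hσ
    exact ⟨le_max_right _ _, max_le (by linarith [hσ.2]) hm⟩
  refine ⟨?_, ?_, ?_, by linarith⟩
  · intro σ hσ
    refine ⟨hD _ (key σ hσ), ?_⟩
    have h1 := hd _ (key σ hσ)
    have h2 := dF_le D x (γ (max (σ - dF D x) 0))
    have h3 := hL 0 ⟨le_rfl, hm⟩ _ (key σ hσ)
    rw [h0] at h3
    set t := max (σ - dF D x) 0 with ht
    have ht0 : 0 ≤ t := le_max_right _ _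
    have ht1 : σ - dF D x ≤ t := le_max_left _ _
    rw [zero_sub, abs_neg, abs_of_nonneg ht0] at h3
    rw [div_le_iff₀ (by linarith)] at h1
    have h4 := dF_nonneg D (γ t)
    change σ ≤ 3 * c * dF D (γ t)
    nlinarith
  · intro σ hσ σ' hσ'
    refine (hL _ (key σ hσ) _ (key σ' hσ')).trans ?_
    have := abs_max_sub_max_le_abs (σ - dF D x) (σ' - dF D x) 0
    simpa using this
  · intro σ hσ
    simp only
    rw [max_eq_right (by linarith), h0]

theorem exists_halves {n : ℕ} {c : ℝ} (hc : 1 ≤ c) {D : Set (Eucl n)} (hD : IsJohnDomain n c D)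
    {x w : Eucl n} (hx : x ∈ D) (hw : w ∈ D) :
    ∃ S S' z z', HalfCurve c D x z S ∧ HalfCurve c D w z' S' ∧ z S = z' S' ∧
      S ≤ 3 * S' ∧ S' ≤ 3 * S := by
  obtain ⟨l, hl, γ, h0, h1, h2, h3, h4⟩ := hD.2.2 x hx w hw
  have hL : ∀ t ∈ Icc 0 l, ∀ s ∈ Icc 0 l, dist (γ t) (γ s) ≤ |t - s| := by
    intro t ht s hs
    have := h3.dist_le_mul t ht s hs
    simpa [Real.dist_eq] using this
  have hxw : dist x w ≤ l := by
    have := hL 0 ⟨le_rfl, hl⟩ l ⟨hl, le_rfl⟩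
    rw [h0, h1] at this
    simpa [abs_of_nonneg hl] using this
  have ha := dF_le D x w
  have hb := dF_le D w x
  rw [dist_comm] at hb
  have hdx := dF_nonneg D x
  have hdw := dF_nonneg D w
  refine ⟨_, _, _, _, half_of_curve hc (m := l/2) (γ := γ) (by linarith) h0 ?_ ?_ ?_,
    half_of_curve hc (m := l/2) (γ := fun t => γ (l - t)) (by linarith) ?_ ?_ ?_ ?_, ?_, ?_, ?_⟩
  · exact fun t ht => h2 t ⟨ht.1, by linarith [ht.1, ht.2]⟩
  · exact fun t ht s hs => hL t ⟨ht.1, by linarith [ht.1, ht.2]⟩ s ⟨hs.1, by linarith [hs.1, hs.2]⟩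
  · intro t ht
    have := h4 t ⟨ht.1, by linarith [ht.1, ht.2]⟩
    rwa [min_eq_left (by linarith [ht.1, ht.2])] at this
  · simpa using h1
  · exact fun t ht => h2 _ ⟨by linarith [ht.1, ht.2], by linarith [ht.1, ht.2]⟩
  · intro t ht s hs
    refine (hL (l - t) ⟨by linarith [ht.1, ht.2], by linarith [ht.1, ht.2]⟩ (l - s)
      ⟨by linarith [hs.1, hs.2], by linarith [hs.1, hs.2]⟩).trans ?_
    rw [← abs_neg]
    apply le_of_eq; congr 1; ring
  · intro t ht
    have := h4 (l - t) ⟨by linarith [ht.1, ht.2], by linarith [ht.1, ht.2]⟩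
    rw [min_eq_right (by linarith [ht.1, ht.2])] at this
    simpa [dF] using this
  · congr 1
    rw [max_eq_left (by linarith), max_eq_left (by linarith)]
    ring
  · linarith
  · linarith

theorem exists_far {n : ℕ} {c : ℝ} (hc : 1 ≤ c) {D : Set (Eucl n)} (hD : IsJohnDomain n c D)
    (hb : ¬ Bornology.IsBounded D) (R : ℝ) : ∃ w ∈ D, R ≤ dF D w := by
  obtain ⟨x, hx⟩ := hD.2.1.nonempty
  have : ∃ w ∈ D, 2 * c * |R| < dist w x := by
    by_contra h
    push Not at h
    exact hb (isBounded_closedBall.subset (fun w hw => mem_closedBall.2 (h w hw)))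
  obtain ⟨w, hw, hwx⟩ := this
  obtain ⟨l, hl, γ, h0, h1, h2, h3, h4⟩ := hD.2.2 x hx w hw
  have hxw : dist x w ≤ l := by
    have := h3.dist_le_mul 0 ⟨le_rfl, hl⟩ l ⟨hl, le_rfl⟩
    rw [h0, h1] at this
    simpa [Real.dist_eq, abs_of_nonneg hl] using this
  refine ⟨γ (l/2), h2 _ ⟨by linarith, by linarith⟩, ?_⟩
  have := h4 (l/2) ⟨by linarith, by linarith⟩
  rw [min_eq_left (by linarith), div_le_iff₀ (by linarith)] at this
  rw [dist_comm] at hxw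
  have h5 : 2 * c * |R| < l := by linarith
  have h6 : c * |R| ≤ c * dF D (γ (l/2)) := by unfold dF; linarith
  exact (le_abs_self R).trans (le_of_mul_le_mul_left h6 (by linarith))

open MeasureTheory Metric Set
open scoped ENNReal NNReal BigOperators

/-! ### One step of the chain -/

/-- Standing assumptions on the parameters. -/
structure Hyp (n : ℕ) (c τ δ p : ℝ) : Prop where
  hn : 2 ≤ n
  hc : 1 ≤ c
  τ0 : 0 < τ
  τ1 : τ < 1
  δ0 : 0 < δ
  δ1 : δ < 1
  hp : 1 ≤ p
  hpn : δ * p < n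

noncomputable def kap (c τ : ℝ) : ℝ := τ / (24 * c)

noncomputable def GG (n : ℕ) (δ τ p : ℝ) (D : Set (Eucl n)) (u : Eucl n → ℝ) (y : Eucl n) : ℝ≥0∞ :=
  ∫⁻ z in tauBall n τ D y, fracKernel n δ p u y z

/-- Mean of `|u - v|` over a ball. -/
noncomputable def FF {n : ℕ} (u : Eucl n → ℝ) (v : ℝ) (z : Eucl n) (ρ : ℝ) : ℝ≥0∞ :=
  (volume (ball z ρ))⁻¹ * ∫⁻ y in ball z ρ, ENNReal.ofReal |u y - v|

noncomputable def om (n : ℕ) : ℝ := (volume (ball (0 : Eucl n) 1)).toReal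

theorem om_pos (n : ℕ) : 0 < om n :=
  ENNReal.toReal_pos (measure_ball_pos volume _ one_pos).ne' measure_ball_lt_top.ne

theorem vol_ball {n : ℕ} (z : Eucl n) {ρ : ℝ} (hρ : 0 < ρ) :
    volume (ball z ρ) = ENNReal.ofReal (om n * ρ ^ (n : ℝ)) := by
  rw [Measure.addHaar_ball_of_pos volume z hρ, mul_comm, ENNReal.ofReal_mul (om_pos n).le, om,
    ENNReal.ofReal_toReal measure_ball_lt_top.ne]
  simp

theorem kap_pos {n : ℕ} {c τ δ p : ℝ} (h : Hyp n c τ δ p) : 0 < kap c τ := by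
  have := h.hc; have := h.τ0; unfold kap; positivity

theorem kap_le {n : ℕ} {c τ δ p : ℝ} (h : Hyp n c τ δ p) : kap c τ * (24 * c) = τ := by
  have := h.hc; unfold kap; field_simp

theorem kap_lt_one {n : ℕ} {c τ δ p : ℝ} (h : Hyp n c τ δ p) : kap c τ < 1 / 24 := by
  have := h.hc; have h1 := h.τ1; have h2 := kap_le h; have h3 := kap_pos h
  nlinarith

theorem measurable_kernel {n : ℕ} {δ p : ℝ} {u : Eucl n → ℝ} (hu : Measurable u) :
    Measurable (fun q : Eucl n × Eucl n => fracKernel n δ p u q.1 q.2) := by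
  unfold fracKernel
  apply Measurable.ennreal_ofReal
  apply Measurable.div
  · exact (measurable_norm.comp ((hu.comp measurable_fst).sub (hu.comp measurable_snd))).pow_const p
  · exact (measurable_fst.dist measurable_snd).pow_const _

theorem measurable_GG {n : ℕ} {δ τ p : ℝ} {D : Set (Eucl n)} {u : Eucl n → ℝ} (hu : Measurable u) :
    Measurable (GG n δ τ p D u) := by
  have hms : MeasurableSet {q : Eucl n × Eucl n |
      edist q.1 q.2 < ENNReal.ofReal τ * Metric.infEDist q.1 (frontier D)} :=
    measurableSet_lt (measurable_fst.edist measurable_snd)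
      ((measurable_infEDist.comp measurable_fst).const_mul _)
  have h1 := ((measurable_kernel (δ := δ) (p := p) hu).indicator hms).lintegral_prod_right'
    (ν := (volume : Measure (Eucl n)))
  convert h1 using 1
  ext y
  unfold GG
  have hms2 : MeasurableSet (tauBall n τ D y) := measurable_prodMk_left (x := y) hms
  rw [← lintegral_indicator hms2]
  rfl

/-- Pointwise Young type inequality. -/
theorem young {T a p : ℝ} (hT : 0 < T) (ha : 0 ≤ a) (hp : 1 ≤ p) :
    a ≤ T + T ^ (1 - p) * a ^ p := by
  rcases le_or_gt a T with h | h
  · have : 0 ≤ T ^ (1 - p) * a ^ p := by positivity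
    linarith
  · have h1 : T ^ (1 - p) * a ^ p ≥ a := by
      have ha' : 0 < a := hT.trans h
      have h2 : a ^ (1 - p) ≤ T ^ (1 - p) := Real.rpow_le_rpow_of_nonpos hT h.le (by linarith)
      calc a = a ^ (1 - p) * a ^ p := by
            rw [← Real.rpow_add ha']; simp
        _ ≤ _ := by gcongr
    linarith

theorem ptw {n : ℕ} {δ p : ℝ} (hδ : 0 < δ) (hp : 1 ≤ p) (u : Eucl n → ℝ) {y y' : Eucl n}
    {T L : ℝ} (hT : 0 < T) (hL : dist y y' ≤ L) :
    ENNReal.ofReal |u y - u y'| ≤ ENNReal.ofReal T +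
      ENNReal.ofReal (T ^ (1 - p) * L ^ ((n:ℝ) + δ * p)) * fracKernel n δ p u y y' := by
  have hL0 : 0 ≤ L := dist_nonneg.trans hL
  unfold fracKernel
  rw [← ENNReal.ofReal_mul (by positivity), ← ENNReal.ofReal_add hT.le (by positivity)]
  apply ENNReal.ofReal_le_ofReal
  rcases eq_or_ne y y' with rfl | hne
  · simp; positivity
  have hd : 0 < dist y y' := dist_pos.2 hne
  refine (young hT (abs_nonneg (u y - u y')) hp).trans ?_
  have h1 : (dist y y') ^ ((n:ℝ) + δ * p) ≤ L ^ ((n:ℝ) + δ * p) :=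
    Real.rpow_le_rpow hd.le hL (by positivity)
  have h2 : 0 < (dist y y') ^ ((n:ℝ) + δ * p) := by positivity
  have h3 : |u y - u y'| ^ p ≤ L ^ ((n:ℝ) + δ * p) *
      (|u y - u y'| ^ p / dist y y' ^ ((n:ℝ) + δ * p)) := by
    rw [mul_div_assoc', le_div_iff₀ h2, mul_comm]
    gcongr
  rw [mul_assoc]
  gcongr

theorem avg_bound {n : ℕ} {c τ δ p : ℝ} (h : Hyp n c τ δ p) :
    ∃ C0 : ℝ, 0 < C0 ∧ ∀ (D : Set (Eucl n)) (u : Eucl n → ℝ) (y z' : Eucl n) (σ' T : ℝ),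
      0 < σ' → 0 < T →
      (∀ y' ∈ ball z' (kap c τ * σ'), y' ∈ tauBall n τ D y ∧ dist y y' ≤ 16 * (kap c τ * σ')) →
      (volume (ball z' (kap c τ * σ')))⁻¹ * ∫⁻ y' in ball z' (kap c τ * σ'),
          ENNReal.ofReal |u y - u y'|
        ≤ ENNReal.ofReal T + ENNReal.ofReal (C0 * (T ^ (1 - p) * σ' ^ (δ * p))) *
          GG n δ τ p D u y := by
  have hk := kap_pos h
  have hom := om_pos n
  have hδ := h.δ0
  have hp := h.hp
  refine ⟨(om n)⁻¹ * 16 ^ ((n:ℝ) + δ * p) * kap c τ ^ (δ * p), by positivity, ?_⟩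
  intro D u y z' σ' T hσ hT hB
  set ρ := kap c τ * σ' with hρ
  have hρ0 : 0 < ρ := by positivity
  set B := ball z' ρ with hBdef
  have hV : volume B = ENNReal.ofReal (om n * ρ ^ (n:ℝ)) := vol_ball z' hρ0
  have hVpos : 0 < om n * ρ ^ (n:ℝ) := by positivity
  have hV0 : volume B ≠ 0 := by rw [hV]; simpa using hVpos
  have hVt : volume B ≠ ⊤ := by rw [hV]; simp
  have h1 : ∫⁻ y' in B, ENNReal.ofReal |u y - u y'| ≤ ENNReal.ofReal T * volume B +
      ENNReal.ofReal (T ^ (1 - p) * (16 * ρ) ^ ((n:ℝ) + δ * p)) * GG n δ τ p D u y := by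
    calc ∫⁻ y' in B, ENNReal.ofReal |u y - u y'|
        ≤ ∫⁻ y' in B, (ENNReal.ofReal T +
      ENNReal.ofReal (T ^ (1 - p) * (16 * ρ) ^ ((n:ℝ) + δ * p)) * fracKernel n δ p u y y') := by
          apply setLIntegral_mono' measurableSet_ball
          intro y' hy'
          exact ptw hδ hp u hT (hB y' hy').2
      _ = ENNReal.ofReal T * volume B +
          ENNReal.ofReal (T ^ (1 - p) * (16 * ρ) ^ ((n:ℝ) + δ * p)) *
            ∫⁻ y' in B, fracKernel n δ p u y y' := by
          rw [lintegral_add_left measurable_const, lintegral_const_mul' _ _ ENNReal.ofReal_ne_top]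
          simp
      _ ≤ _ := by
          gcongr
          unfold GG
          exact lintegral_mono_set (fun y' hy' => (hB y' hy').1)
  calc _ ≤ (volume B)⁻¹ * (ENNReal.ofReal T * volume B +
      ENNReal.ofReal (T ^ (1 - p) * (16 * ρ) ^ ((n:ℝ) + δ * p)) * GG n δ τ p D u y) := by gcongr
    _ = ENNReal.ofReal T + ((volume B)⁻¹ *
      ENNReal.ofReal (T ^ (1 - p) * (16 * ρ) ^ ((n:ℝ) + δ * p))) * GG n δ τ p D u y := by
        rw [mul_add, mul_comm (ENNReal.ofReal T), ← mul_assoc, ENNReal.inv_mul_cancel hV0 hVt,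
          one_mul, mul_assoc]
    _ ≤ _ := by
        gcongr
        rw [hV, ← ENNReal.ofReal_inv_of_pos hVpos, ← ENNReal.ofReal_mul (by positivity)]
        apply ENNReal.ofReal_le_ofReal
        apply le_of_eq
        rw [Real.mul_rpow (by norm_num) hρ0.le, Real.rpow_add hρ0, hρ,
          Real.mul_rpow (y := σ') (z := δ * p) hk.le hσ.le]
        have : (kap c τ * σ') ^ (n:ℝ) ≠ 0 := by positivity
        field_simp

theorem start_bound {n : ℕ} {c τ δ p : ℝ} (h : Hyp n c τ δ p) :
    ∃ C0 : ℝ, 0 < C0 ∧ ∀ (D : Set (Eucl n)) (u : Eucl n → ℝ), Measurable u →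
      ∀ (v : ℝ) (y z' : Eucl n) (σ' T : ℝ), 0 < σ' → 0 < T →
      (∀ y' ∈ ball z' (kap c τ * σ'), y' ∈ tauBall n τ D y ∧ dist y y' ≤ 16 * (kap c τ * σ')) →
      ENNReal.ofReal |u y - v| ≤ FF u v z' (kap c τ * σ') + ENNReal.ofReal T +
        ENNReal.ofReal (C0 * (T ^ (1 - p) * σ' ^ (δ * p))) * GG n δ τ p D u y := by
  obtain ⟨C0, hC0, H⟩ := avg_bound h
  have hk := kap_pos h
  refine ⟨C0, hC0, fun D u hu v y z' σ' T hσ hT hB => ?_⟩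
  have h1 := H D u y z' σ' T hσ hT hB
  set ρ := kap c τ * σ' with hρ
  have hρ0 : 0 < ρ := by positivity
  set B := ball z' ρ with hBdef
  have hV0 : volume B ≠ 0 := (measure_ball_pos volume _ hρ0).ne'
  have hVt : volume B ≠ ⊤ := measure_ball_lt_top.ne
  rw [add_assoc]
  refine le_trans ?_ (add_le_add_right h1 (FF u v z' ρ))
  unfold FF
  rw [← mul_add, ← lintegral_add_left (by fun_prop)]
  calc ENNReal.ofReal |u y - v| = (volume B)⁻¹ * ∫⁻ y' in B, ENNReal.ofReal |u y - v| := by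
        rw [setLIntegral_const, mul_comm, mul_assoc, ENNReal.mul_inv_cancel hV0 hVt, mul_one]
    _ ≤ _ := by
        gcongr with y'
        rw [← ENNReal.ofReal_add (abs_nonneg _) (abs_nonneg _)]
        apply ENNReal.ofReal_le_ofReal
        have := abs_add_le (u y' - v) (u y - u y')
        rwa [show u y' - v + (u y - u y') = u y - v by ring] at this

theorem step_bound {n : ℕ} {c τ δ p : ℝ} (h : Hyp n c τ δ p) :
    ∃ C1 : ℝ, 0 < C1 ∧ ∀ (D : Set (Eucl n)), (frontier D).Nonempty →
      ∀ (u : Eucl n → ℝ), Measurable u →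
      ∀ (v : ℝ) (z z' : Eucl n) (σ σ' T : ℝ), 0 < σ → 0 < σ' → 0 < T →
      σ ≤ 3 * c * dF D z → dist z z' + kap c τ * σ + kap c τ * σ' ≤ 4 * (kap c τ * σ) →
      σ ≤ 4 * σ' →
      FF u v z (kap c τ * σ) ≤ FF u v z' (kap c τ * σ') + ENNReal.ofReal T +
        ENNReal.ofReal (C1 * (T ^ (1 - p) * σ ^ (δ * p - n))) *
          ∫⁻ y in ball z (kap c τ * σ), GG n δ τ p D u y := by
  obtain ⟨C0, hC0, H⟩ := start_bound h
  have hk := kap_pos h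
  have hom := om_pos n
  have hδ := h.δ0
  have hp := h.hp
  have hc := h.hc
  refine ⟨C0 * 3 ^ (δ * p) * (om n)⁻¹ * ((kap c τ) ^ (n:ℝ))⁻¹, by positivity, ?_⟩
  intro D hf u hu v z z' σ σ' T hσ hσ' hT hz hd hr
  have hσ3 : σ' ≤ 3 * σ := by
    have := dist_nonneg (x := z) (y := z')
    have : kap c τ * σ' ≤ kap c τ * (3 * σ) := by linarith
    exact le_of_mul_le_mul_left this hk
  set ρ := kap c τ * σ with hρ
  have hρ0 : 0 < ρ := by positivity
  set B := ball z ρ with hBdef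
  have hVpos : 0 < om n * ρ ^ (n:ℝ) := by positivity
  have hV : volume B = ENNReal.ofReal (om n * ρ ^ (n:ℝ)) := vol_ball z hρ0
  have hV0 : volume B ≠ 0 := (measure_ball_pos volume _ hρ0).ne'
  have hVt : volume B ≠ ⊤ := measure_ball_lt_top.ne
  have hpt : ∀ y ∈ B, ENNReal.ofReal |u y - v| ≤ FF u v z' (kap c τ * σ') + ENNReal.ofReal T +
        ENNReal.ofReal (C0 * (T ^ (1 - p) * σ' ^ (δ * p))) * GG n δ τ p D u y := by
    intro y hy
    apply H D u hu v y z' σ' T hσ' hT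
    intro y' hy'
    rw [mem_ball] at hy hy'
    have e1 : dist y y' < 4 * ρ := by
      have a1 := dist_triangle4 y z z' y'
      rw [dist_comm z' y'] at a1
      linarith
    constructor
    · apply mem_tauBall h.τ0 hf
      refine e1.trans_le ?_
      have a2 := dF_le D z y
      rw [dist_comm] at a2
      have a3 : σ ≤ 3 * c * (dF D y + ρ) := hz.trans (by gcongr; linarith)
      have a4 := kap_lt_one h
      have a5 := kap_le h
      have a6 := h.τ1
      have a7 : c * ρ ≤ σ / 24 := by
        have : c * ρ * 24 = τ * σ := by rw [hρ]; linear_combination σ * a5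
        have : τ * σ ≤ 1 * σ := by gcongr
        linarith
      have a8 : σ / 2 ≤ 3 * c * dF D y := by linarith
      have a9 : τ * (σ / 2) ≤ τ * (3 * c * dF D y) := mul_le_mul_of_nonneg_left a8 h.τ0.le
      have a10 : τ * σ = 24 * c * ρ := by rw [hρ]; linear_combination (-σ) * a5
      have a11 : c * (4 * ρ) ≤ c * (τ * dF D y) := by linarith
      exact le_of_mul_le_mul_left a11 (by linarith)
    · refine e1.le.trans ?_
      rw [hρ]
      have : kap c τ * σ ≤ kap c τ * (4 * σ') := by gcongr
      linarith
  calc FF u v z ρ ≤ (volume B)⁻¹ * ∫⁻ y in B, (FF u v z' (kap c τ * σ') + ENNReal.ofReal T +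
        ENNReal.ofReal (C0 * (T ^ (1 - p) * σ' ^ (δ * p))) * GG n δ τ p D u y) := by
        unfold FF
        exact mul_le_mul_right (setLIntegral_mono' measurableSet_ball hpt) _
    _ = FF u v z' (kap c τ * σ') + ENNReal.ofReal T + (volume B)⁻¹ *
        ENNReal.ofReal (C0 * (T ^ (1 - p) * σ' ^ (δ * p))) * ∫⁻ y in B, GG n δ τ p D u y := by
        rw [lintegral_add_left measurable_const, lintegral_const_mul' _ _ ENNReal.ofReal_ne_top,
          setLIntegral_const, mul_add, ← mul_assoc, mul_comm _ (volume B), ← mul_assoc,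
          ENNReal.mul_inv_cancel hV0 hVt, one_mul, mul_assoc]
    _ ≤ _ := by
        gcongr
        rw [hV, ← ENNReal.ofReal_inv_of_pos hVpos, ← ENNReal.ofReal_mul (by positivity)]
        apply ENNReal.ofReal_le_ofReal
        have b1 : σ' ^ (δ * p) ≤ 3 ^ (δ * p) * σ ^ (δ * p) := by
          rw [← Real.mul_rpow (by norm_num) hσ.le]
          exact Real.rpow_le_rpow hσ'.le hσ3 (by positivity)
        calc (om n * ρ ^ (n:ℝ))⁻¹ * (C0 * (T ^ (1 - p) * σ' ^ (δ * p)))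
            ≤ (om n * ρ ^ (n:ℝ))⁻¹ * (C0 * (T ^ (1 - p) * (3 ^ (δ * p) * σ ^ (δ * p)))) := by gcongr
          _ = _ := by
            rw [hρ, Real.mul_rpow hk.le hσ.le, Real.rpow_sub hσ]
            field_simp

open MeasureTheory Metric Set
open scoped ENNReal NNReal BigOperators

/-! ### Chains -/

theorem energy_eq {n : ℕ} {δ τ p : ℝ} (D : Set (Eucl n)) (u : Eucl n → ℝ) :
    fracEnergyTau n δ τ p D u = ∫⁻ y in D, GG n δ τ p D u y := rfl

/-- The bound for a chain step at scale `σ ≥ r`. -/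
noncomputable def bb (n : ℕ) (δ p t r σ : ℝ) : ℝ := t * (r / σ) ^ (((n:ℝ) - δ * p) / p)

theorem bb_pos {n : ℕ} {δ p t r σ : ℝ} (ht : 0 < t) (hr : 0 < r) (hσ : 0 < σ) :
    0 < bb n δ p t r σ := by unfold bb; positivity

theorem bb_anti {n : ℕ} {c τ δ p t r σ σ' : ℝ} (h : Hyp n c τ δ p) (ht : 0 < t) (hr : 0 < r)
    (hσ : 0 < σ) (hσσ : σ ≤ σ') : bb n δ p t r σ' ≤ bb n δ p t r σ := by
  have := h.hpn; have := h.hp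
  have h1 : 0 ≤ ((n:ℝ) - δ * p) / p := div_nonneg (by linarith) (by linarith)
  have : 0 < σ' := hσ.trans_le hσσ
  unfold bb
  gcongr

theorem bb_le {n : ℕ} {c τ δ p t r σ : ℝ} (h : Hyp n c τ δ p) (ht : 0 < t) (hr : 0 < r)
    (hσ : r ≤ σ) : bb n δ p t r σ ≤ t := by
  refine (bb_anti h ht hr hr hσ).trans ?_
  unfold bb
  rw [div_self hr.ne']
  simp

theorem bb_mul {n : ℕ} {δ p t r σ l : ℝ} (hr : 0 < r) (hσ : 0 < σ) (hl : 0 < l) :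
    bb n δ p t r (l * σ) = bb n δ p t r σ * l ^ (-(((n:ℝ) - δ * p) / p)) := by
  unfold bb
  rw [mul_comm l σ, ← div_div, div_eq_mul_inv (r / σ) l, Real.mul_rpow (by positivity) (by positivity),
    Real.inv_rpow hl.le, Real.rpow_neg hl.le]
  ring

theorem bb_num {n : ℕ} {c τ δ p t r σ : ℝ} (h : Hyp n c τ δ p) (ht : 0 < t) (hr : 0 < r)
    (hσ : 0 < σ) :
    (bb n δ p t r σ) ^ (1 - p) * σ ^ (δ * p - n) * (t ^ p * r ^ ((n:ℝ) - δ * p))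
      = bb n δ p t r σ := by
  have hp := h.hp
  have hb := bb_pos (n := n) (δ := δ) (p := p) ht hr hσ
  have h1 : (bb n δ p t r σ) ^ p = t ^ p * (r / σ) ^ ((n:ℝ) - δ * p) := by
    unfold bb
    rw [Real.mul_rpow ht.le (by positivity), ← Real.rpow_mul (by positivity),
      div_mul_cancel₀ _ (by linarith)]
  have h2 : σ ^ (δ * p - n) * (t ^ p * r ^ ((n:ℝ) - δ * p)) = (bb n δ p t r σ) ^ p := by
    rw [h1, Real.div_rpow hr.le hσ.le, show δ * p - (n:ℝ) = -((n:ℝ) - δ * p) by ring,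
      Real.rpow_neg hσ.le]
    field_simp
  rw [mul_assoc, h2, ← Real.rpow_add hb]
  simp

theorem far_step {n : ℕ} {c τ δ p : ℝ} (h : Hyp n c τ δ p) :
    ∃ C2 : ℝ, 0 < C2 ∧ ∀ (D : Set (Eucl n)), IsOpen D → (frontier D).Nonempty →
      ∀ (u : Eucl n → ℝ), Measurable u → ∀ (t r : ℝ), 0 < t → 0 < r →
      fracEnergyTau n δ τ p D u ≤ ENNReal.ofReal (t ^ p * r ^ ((n:ℝ) - δ * p)) →
      ∀ (v : ℝ) (z z' : Eucl n) (σ σ' : ℝ), z ∈ D → 0 < σ → 0 < σ' →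
      σ ≤ 3 * c * dF D z → dist z z' + kap c τ * σ + kap c τ * σ' ≤ 4 * (kap c τ * σ) →
      σ ≤ 4 * σ' →
      FF u v z (kap c τ * σ) ≤ FF u v z' (kap c τ * σ') + ENNReal.ofReal (C2 * bb n δ p t r σ) := by
  obtain ⟨C1, hC1, H⟩ := step_bound h
  refine ⟨1 + C1, by linarith, ?_⟩
  intro D ho hf u hu t r ht hr hE v z z' σ σ' hzD hσ hσ' hz hd hs
  have hb := bb_pos (n := n) (δ := δ) (p := p) ht hr hσ
  have hk := kap_pos h
  refine (H D hf u hu v z z' σ σ' _ hσ hσ' hb hz hd hs).trans ?_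
  rw [add_assoc]
  gcongr
  have hsub : ball z (kap c τ * σ) ⊆ D := by
    apply ball_subD ho hzD (by positivity)
    have h1 := kap_le h
    have h2 := h.τ1
    have h3 := dF_nonneg D z
    calc kap c τ * σ ≤ kap c τ * (3 * c * dF D z) := by gcongr
      _ = τ / 8 * dF D z := by linear_combination dF D z / 8 * h1
      _ ≤ 1 * dF D z := by gcongr; linarith
      _ = _ := one_mul _
  have h4 : ∫⁻ y in ball z (kap c τ * σ), GG n δ τ p D u y ≤
      ENNReal.ofReal (t ^ p * r ^ ((n:ℝ) - δ * p)) :=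
    (lintegral_mono_set hsub).trans hE
  calc _ ≤ ENNReal.ofReal (bb n δ p t r σ) + ENNReal.ofReal
        (C1 * (bb n δ p t r σ ^ (1 - p) * σ ^ (δ * p - n))) *
          ENNReal.ofReal (t ^ p * r ^ ((n:ℝ) - δ * p)) := by gcongr
    _ = _ := by
      rw [← ENNReal.ofReal_mul (by positivity), ← ENNReal.ofReal_add hb.le (by positivity),
        mul_assoc, bb_num h ht hr hσ]
      congr 1; ring

theorem half_dist {n : ℕ} {c τ δ p : ℝ} (h : Hyp n c τ δ p) {D : Set (Eucl n)} {x : Eucl n}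
    {z : ℝ → Eucl n} {S : ℝ} (hz : HalfCurve c D x z S) {σ σ' : ℝ} (hσ : 0 < σ) (hσσ : σ ≤ σ')
    (hl : σ' ≤ (1 + kap c τ) * σ) (hS : σ' ≤ S) :
    dist (z σ) (z σ') + kap c τ * σ + kap c τ * σ' ≤ 4 * (kap c τ * σ) ∧
    dist (z σ') (z σ) + kap c τ * σ' + kap c τ * σ ≤ 4 * (kap c τ * σ') ∧ σ' ≤ 4 * σ := by
  have hk := kap_pos h
  have hk1 := kap_lt_one h
  have h1 := hz.2.1 σ ⟨hσ.le, hσσ.trans hS⟩ σ' ⟨(hσ.trans_le hσσ).le, hS⟩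
  rw [abs_sub_comm, abs_of_nonneg (by linarith)] at h1
  have h2 : σ' ≤ 2 * σ := hl.trans (by gcongr; linarith)
  have h3 : kap c τ * σ' ≤ kap c τ * (2 * σ) := by gcongr
  have h4 : kap c τ * σ ≤ kap c τ * σ' := by gcongr
  have h5 : σ' - σ ≤ kap c τ * σ := by linarith
  refine ⟨by linarith, ?_, by linarith⟩
  rw [dist_comm]; linarith

theorem far_chain {n : ℕ} {c τ δ p : ℝ} (h : Hyp n c τ δ p) :
    ∃ C3 : ℝ, 0 < C3 ∧ ∀ (D : Set (Eucl n)), IsOpen D → (frontier D).Nonempty →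
      ∀ (u : Eucl n → ℝ), Measurable u → ∀ (t r : ℝ), 0 < t → 0 < r →
      fracEnergyTau n δ τ p D u ≤ ENNReal.ofReal (t ^ p * r ^ ((n:ℝ) - δ * p)) →
      ∀ (v : ℝ) (x : Eucl n) (z : ℝ → Eucl n) (S : ℝ), HalfCurve c D x z S →
      ∀ (σ σ' : ℝ), r ≤ σ → σ ≤ σ' → σ' ≤ S →
      FF u v (z σ) (kap c τ * σ) ≤ FF u v (z σ') (kap c τ * σ') + ENNReal.ofReal (C3 * t) ∧
      FF u v (z σ') (kap c τ * σ') ≤ FF u v (z σ) (kap c τ * σ) + ENNReal.ofReal (C3 * t) := by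
  obtain ⟨C2, hC2, H⟩ := far_step h
  have hk := kap_pos h
  set L := 1 + kap c τ with hL
  set q := L ^ (-(((n:ℝ) - δ * p) / p)) with hq
  have hα : 0 < ((n:ℝ) - δ * p) / p := div_pos (by linarith [h.hpn]) (by linarith [h.hp])
  have hq0 : 0 < q := by positivity
  have hq1 : q < 1 := Real.rpow_lt_one_of_one_lt_of_neg (by linarith) (by linarith)
  refine ⟨C2 / (1 - q), div_pos hC2 (by linarith), ?_⟩
  intro D ho hf u hu t r ht hr hE v x z S hz
  set C3 := C2 / (1 - q) with hC3
  have hC3e : C3 * (1 - q) = C2 := div_mul_cancel₀ _ (by linarith)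
  have hC30 : 0 < C3 := div_pos hC2 (by linarith)
  have hC23 : C2 ≤ C3 := by nlinarith
  have one : ∀ σ σ', r ≤ σ → σ ≤ σ' → σ' ≤ L * σ → σ' ≤ S →
      FF u v (z σ) (kap c τ * σ) ≤ FF u v (z σ') (kap c τ * σ') +
        ENNReal.ofReal (C2 * bb n δ p t r σ) ∧
      FF u v (z σ') (kap c τ * σ') ≤ FF u v (z σ) (kap c τ * σ) +
        ENNReal.ofReal (C2 * bb n δ p t r σ) := by
    intro σ σ' h1 h2 h3 h4
    have hσ : 0 < σ := hr.trans_le h1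
    have hσ' : 0 < σ' := hσ.trans_le h2
    obtain ⟨d1, d2, d3⟩ := half_dist h hz hσ h2 h3 h4
    obtain ⟨e1, e2⟩ := hz.1 σ ⟨hσ.le, h2.trans h4⟩
    obtain ⟨e3, e4⟩ := hz.1 σ' ⟨hσ'.le, h4⟩
    refine ⟨H D ho hf u hu t r ht hr hE v _ _ σ σ' e1 hσ hσ' e2 d1 (by linarith), ?_⟩
    refine (H D ho hf u hu t r ht hr hE v _ _ σ' σ e3 hσ' hσ e4 d2 d3).trans ?_
    gcongr
    exact bb_anti h ht hr hσ h2
  have main : ∀ i : ℕ, ∀ σ σ', r ≤ σ → σ ≤ σ' → σ' ≤ L ^ i * σ → σ' ≤ S →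
      FF u v (z σ) (kap c τ * σ) ≤ FF u v (z σ') (kap c τ * σ') +
        ENNReal.ofReal (C3 * bb n δ p t r σ) ∧
      FF u v (z σ') (kap c τ * σ') ≤ FF u v (z σ) (kap c τ * σ) +
        ENNReal.ofReal (C3 * bb n δ p t r σ) := by
    intro i
    induction i with
    | zero =>
      intro σ σ' h1 h2 h3 h4
      have : σ = σ' := le_antisymm h2 (by simpa using h3)
      subst this
      exact ⟨le_self_add, le_self_add⟩
    | succ i ih =>
      intro σ σ' h1 h2 h3 h4
      have hσ : 0 < σ := hr.trans_le h1
      have hb := bb_pos (n := n) (δ := δ) (p := p) ht hr hσ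
      rcases le_or_gt σ' (L * σ) with h5 | h5
      · obtain ⟨a1, a2⟩ := one σ σ' h1 h2 h5 h4
        exact ⟨a1.trans (by gcongr), a2.trans (by gcongr)⟩
      · have h6 : σ ≤ L * σ := by nlinarith
        obtain ⟨a1, a2⟩ := one σ (L * σ) h1 h6 le_rfl (h5.le.trans h4)
        obtain ⟨b1, b2⟩ := ih (L * σ) σ' (h1.trans h6) h5.le
          (by rw [← mul_assoc, ← pow_succ]; exact h3) h4
        have hbm : bb n δ p t r (L * σ) = bb n δ p t r σ * q := bb_mul hr hσ (by linarith)
        have key : ENNReal.ofReal (C3 * bb n δ p t r (L * σ)) + ENNReal.ofReal (C2 * bb n δ p t r σ)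
            = ENNReal.ofReal (C3 * bb n δ p t r σ) := by
          rw [hbm, ← ENNReal.ofReal_add (by positivity) (by positivity), ← hC3e]
          congr 1; ring
        constructor
        · refine a1.trans ((add_le_add_left b1 _).trans ?_)
          rw [add_assoc, key]
        · refine b2.trans ((add_le_add_left a2 _).trans ?_)
          rw [add_assoc, add_comm (ENNReal.ofReal (C2 * _)), key]
  intro σ σ' h1 h2 h4
  have hσ : 0 < σ := hr.trans_le h1
  obtain ⟨i, hi⟩ := pow_unbounded_of_one_lt (σ' / σ) (show 1 < L by linarith)
  rw [div_lt_iff₀ hσ] at hi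
  obtain ⟨a1, a2⟩ := main i σ σ' h1 h2 hi.le h4
  have := bb_le h ht hr h1
  exact ⟨a1.trans (by gcongr), a2.trans (by gcongr)⟩

theorem far_connect {n : ℕ} {c τ δ p : ℝ} (h : Hyp n c τ δ p) :
    ∃ C4 : ℝ, 0 < C4 ∧ ∀ (D : Set (Eucl n)), IsOpen D → (frontier D).Nonempty →
      ∀ (u : Eucl n → ℝ), Measurable u → ∀ (t r : ℝ), 0 < t → 0 < r →
      fracEnergyTau n δ τ p D u ≤ ENNReal.ofReal (t ^ p * r ^ ((n:ℝ) - δ * p)) →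
      ∀ (v : ℝ) (x w : Eucl n) (z z' : ℝ → Eucl n) (S S' : ℝ), HalfCurve c D x z S →
      HalfCurve c D w z' S' → z S = z' S' → S ≤ 3 * S' → S' ≤ 3 * S →
      ∀ (σ : ℝ), r ≤ σ → σ ≤ S → r ≤ dF D w →
      FF u v (z σ) (kap c τ * σ) ≤ FF u v w (kap c τ * dF D w) + ENNReal.ofReal (C4 * t) := by
  obtain ⟨C2, hC2, H2⟩ := far_step h
  obtain ⟨C3, hC3, H3⟩ := far_chain h
  refine ⟨2 * C3 + C2, by linarith, ?_⟩
  intro D ho hf u hu t r ht hr hE v x w z z' S S' hz hz' hSS h1 h2 σ hσ hσS hw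
  have hk := kap_pos h
  have hS : 0 < S := by linarith
  have hS' : 0 < S' := by linarith
  have a1 := (H3 D ho hf u hu t r ht hr hE v x z S hz σ S hσ hσS le_rfl).1
  have a3 := (H3 D ho hf u hu t r ht hr hE v w z' S' hz' (dF D w) S' hw hz'.2.2.2 le_rfl).2
  rw [hz'.2.2.1 _ le_rfl] at a3
  have a2 := H2 D ho hf u hu t r ht hr hE v (z S) (z' S') S S'
    (hz.1 S ⟨hS.le, le_rfl⟩).1 hS hS' (hz.1 S ⟨hS.le, le_rfl⟩).2
    (by rw [hSS, dist_self]
        have : kap c τ * S' ≤ kap c τ * (3 * S) := by gcongr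
        linarith) (by linarith)
  have a4 : ENNReal.ofReal (C2 * bb n δ p t r S) ≤ ENNReal.ofReal (C2 * t) := by
    gcongr; exact bb_le h ht hr (hσ.trans hσS)
  calc _ ≤ FF u v w (kap c τ * dF D w) + ENNReal.ofReal (C3 * t) + ENNReal.ofReal (C2 * t)
        + ENNReal.ofReal (C3 * t) := by
        refine a1.trans (add_le_add_left ?_ _)
        exact a2.trans (add_le_add a3 a4)
    _ = _ := by
        rw [add_assoc, add_assoc, ← ENNReal.ofReal_add (by positivity) (by positivity),
          ← ENNReal.ofReal_add (by positivity) (by positivity)]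
        congr 2; ring

open MeasureTheory Metric Set
open scoped ENNReal NNReal BigOperators

/-! ### The value at infinity -/

/-- `a` is the value of `u` at infinity. -/
def AtInf {n : ℕ} (c τ : ℝ) (D : Set (Eucl n)) (u : Eucl n → ℝ) (a : ℝ) : Prop :=
  ∀ ε : ℝ, 0 < ε → ∃ R : ℝ, ∀ w ∈ D, R ≤ dF D w →
    FF u a w (kap c τ * dF D w) ≤ ENNReal.ofReal ε

theorem avg_const {n : ℕ} (z : Eucl n) {ρ : ℝ} (hρ : 0 < ρ) (b : ℝ≥0∞) :
    (volume (ball z ρ))⁻¹ * ∫⁻ _ in ball z ρ, b = b := by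
  rw [setLIntegral_const, mul_comm, mul_assoc,
    ENNReal.mul_inv_cancel (measure_ball_pos volume _ hρ).ne' measure_ball_lt_top.ne, mul_one]

theorem FF_change {n : ℕ} {u : Eucl n → ℝ} (hu : Measurable u) (v v' : ℝ) (z : Eucl n) {ρ : ℝ}
    (hρ : 0 < ρ) : FF u v z ρ ≤ FF u v' z ρ + ENNReal.ofReal |v - v'| := by
  conv_rhs => rw [← avg_const z hρ (ENNReal.ofReal |v - v'|)]
  unfold FF
  rw [← mul_add, ← lintegral_add_left (by fun_prop)]
  gcongr with y
  rw [← ENNReal.ofReal_add (abs_nonneg _) (abs_nonneg _)]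
  apply ENNReal.ofReal_le_ofReal
  have := abs_add_le (u y - v') (v' - v)
  rw [abs_sub_comm v v']
  rwa [show u y - v' + (v' - v) = u y - v by ring] at this

theorem FF_two {n : ℕ} {u : Eucl n → ℝ} (hu : Measurable u) (v v' : ℝ) (z : Eucl n) {ρ : ℝ}
    (hρ : 0 < ρ) : ENNReal.ofReal |v - v'| ≤ FF u v z ρ + FF u v' z ρ := by
  conv_lhs => rw [← avg_const z hρ (ENNReal.ofReal |v - v'|)]
  unfold FF
  rw [← mul_add, ← lintegral_add_left (by fun_prop)]
  gcongr with y
  rw [← ENNReal.ofReal_add (abs_nonneg _) (abs_nonneg _)]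
  apply ENNReal.ofReal_le_ofReal
  have := abs_add_le (v - u y) (u y - v')
  rw [abs_sub_comm (u y) v]
  rwa [show v - u y + (u y - v') = v - v' by ring] at this

theorem exists_scale {n : ℕ} {c τ δ p : ℝ} (h : Hyp n c τ δ p) {E : ℝ≥0∞} (hE : E < ⊤) {t : ℝ}
    (ht : 0 < t) : ∃ r : ℝ, 0 < r ∧ E ≤ ENNReal.ofReal (t ^ p * r ^ ((n:ℝ) - δ * p)) := by
  have hs : 0 < (n:ℝ) - δ * p := by linarith [h.hpn]
  refine ⟨((E.toReal + 1) / t ^ p) ^ (1 / ((n:ℝ) - δ * p)), by positivity, ?_⟩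
  rw [← Real.rpow_mul (by positivity), one_div, inv_mul_cancel₀ hs.ne', Real.rpow_one,
    mul_div_cancel₀ _ (by positivity : t ^ p ≠ 0)]
  calc E = ENNReal.ofReal E.toReal := (ENNReal.ofReal_toReal hE.ne).symm
    _ ≤ _ := by gcongr; linarith

theorem exists_value {n : ℕ} {c τ δ p : ℝ} (h : Hyp n c τ δ p) :
    ∃ C5 : ℝ, 0 < C5 ∧ ∀ (D : Set (Eucl n)), IsOpen D → (frontier D).Nonempty →
      ∀ (u : Eucl n → ℝ), Measurable u → ∀ (t r : ℝ), 0 < t → 0 < r →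
      fracEnergyTau n δ τ p D u ≤ ENNReal.ofReal (t ^ p * r ^ ((n:ℝ) - δ * p)) →
      ∀ w ∈ D, r ≤ dF D w → ∃ v : ℝ, FF u v w (kap c τ * dF D w) ≤ ENNReal.ofReal (C5 * t) := by
  obtain ⟨C0, hC0, H⟩ := avg_bound h
  have hk := kap_pos h
  have hom := om_pos n
  refine ⟨1 + C0 * (om n)⁻¹ * ((kap c τ) ^ (n:ℝ))⁻¹, by positivity, ?_⟩
  intro D ho hf u hu t r ht hr hE w hw hrw
  set σ := dF D w with hσdef
  have hσ : 0 < σ := hr.trans_le hrw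
  set ρ := kap c τ * σ with hρ
  have hρ0 : 0 < ρ := by positivity
  have hk1 := kap_lt_one h
  have hsub : ball w ρ ⊆ D := ball_subD ho hw hρ0 (by rw [← hσdef, hρ]; nlinarith)
  have hVpos : 0 < om n * ρ ^ (n:ℝ) := by positivity
  obtain ⟨y, hy, hGy⟩ := exists_le_setLAverage (μ := volume) (s := ball w ρ)
    (f := GG n δ τ p D u) (measure_ball_pos volume _ hρ0).ne' measure_ball_lt_top.ne
    (measurable_GG hu).aemeasurable
  rw [setLAverage_eq, vol_ball w hρ0] at hGy
  refine ⟨u y, ?_⟩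
  have h1 := H D u y w σ t hσ ht (by
    intro y' hy'
    rw [mem_ball] at hy hy'
    have e1 : dist y y' < 2 * ρ := by
      have := dist_triangle_right y y' w
      linarith
    refine ⟨mem_tauBall h.τ0 hf (e1.trans_le ?_), by linarith⟩
    have a1 := dF_le D w y
    rw [dist_comm] at a1
    have a2 : σ / 2 ≤ dF D y := by
      have : ρ ≤ σ / 24 := by rw [hρ]; nlinarith
      linarith
    have a3 := kap_le h
    have a4 := h.hc
    have a5 := h.τ0
    have a6 : kap c τ * 24 ≤ τ := by
      linarith [mul_le_mul_of_nonneg_left a4 hk.le]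
    calc 2 * ρ = (kap c τ * 24) * (σ / 12) := by rw [hρ]; ring
      _ ≤ τ * (σ / 12) := by gcongr
      _ ≤ τ * dF D y := by gcongr; linarith)
  have h2 : FF u (u y) w ρ = (volume (ball w ρ))⁻¹ * ∫⁻ y' in ball w ρ,
          ENNReal.ofReal |u y - u y'| := by
    unfold FF; simp_rw [abs_sub_comm]
  rw [h2]
  refine h1.trans ?_
  have h3 : GG n δ τ p D u y ≤ ENNReal.ofReal (t ^ p * r ^ ((n:ℝ) - δ * p) / (om n * ρ ^ (n:ℝ))) := by
    rw [ENNReal.ofReal_div_of_pos hVpos]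
    refine hGy.trans ?_
    gcongr
    exact (lintegral_mono_set hsub).trans hE
  calc _ ≤ ENNReal.ofReal t + ENNReal.ofReal (C0 * (t ^ (1 - p) * σ ^ (δ * p))) *
        ENNReal.ofReal (t ^ p * r ^ ((n:ℝ) - δ * p) / (om n * ρ ^ (n:ℝ))) := by gcongr
    _ ≤ _ := by
      rw [← ENNReal.ofReal_mul (by positivity), ← ENNReal.ofReal_add ht.le (by positivity)]
      apply ENNReal.ofReal_le_ofReal
      have b1 : t ^ (1 - p) * t ^ p = t := by rw [← Real.rpow_add ht]; simp
      have b2 : r ^ ((n:ℝ) - δ * p) ≤ σ ^ ((n:ℝ) - δ * p) :=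
        Real.rpow_le_rpow hr.le hrw (by linarith [h.hpn])
      have b3 : σ ^ (δ * p) * σ ^ ((n:ℝ) - δ * p) = σ ^ (n:ℝ) := by
        rw [← Real.rpow_add hσ]; congr 1; ring
      calc t + C0 * (t ^ (1 - p) * σ ^ (δ * p)) * (t ^ p * r ^ ((n:ℝ) - δ * p) / (om n * ρ ^ (n:ℝ)))
          ≤ t + C0 * (t ^ (1 - p) * σ ^ (δ * p)) *
            (t ^ p * σ ^ ((n:ℝ) - δ * p) / (om n * ρ ^ (n:ℝ))) := by gcongr
        _ = t + C0 * ((t ^ (1 - p) * t ^ p) * (σ ^ (δ * p) * σ ^ ((n:ℝ) - δ * p))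
              / (om n * ρ ^ (n:ℝ))) := by ring
        _ = _ := by
          rw [b1, b3, hρ, Real.mul_rpow hk.le hσ.le]
          field_simp

theorem exists_atInf {n : ℕ} {c τ δ p : ℝ} (h : Hyp n c τ δ p) {D : Set (Eucl n)}
    (hD : IsJohnDomain n c D) (hb : ¬ Bornology.IsBounded D) {u : Eucl n → ℝ} (hu : Measurable u)
    (hE : fracEnergyTau n δ τ p D u < ⊤) : ∃ a : ℝ, AtInf c τ D u a := by
  have hk := kap_pos h
  have hf := frontier_ne h.hc hD hb
  have ho := hD.1
  obtain ⟨C4, hC4, H4⟩ := far_connect h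
  obtain ⟨C5, hC5, H5⟩ := exists_value h
  have step : ∀ ε : ℝ, 0 < ε → ∃ v R : ℝ, ∀ w ∈ D, R ≤ dF D w →
      FF u v w (kap c τ * dF D w) ≤ ENNReal.ofReal ε := by
    intro ε hε
    obtain ⟨r, hr, hr2⟩ := exists_scale h hE (t := ε / (C4 + C5)) (by positivity)
    obtain ⟨w0, hw0, hw0r⟩ := exists_far h.hc hD hb r
    obtain ⟨v, hv⟩ := H5 D ho hf u hu _ r (by positivity) hr hr2 w0 hw0 hw0r
    refine ⟨v, r, fun w hw hwr => ?_⟩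
    obtain ⟨S, S', z, z', a1, a2, a3, a4, a5⟩ := exists_halves h.hc hD hw hw0
    have := H4 D ho hf u hu _ r (by positivity) hr hr2 v w w0 z z' S S' a1 a2 a3 a4 a5 (dF D w) hwr
      a1.2.2.2 hw0r
    rw [a1.2.2.1 _ le_rfl] at this
    refine this.trans ((add_le_add_left hv _).trans ?_)
    rw [← ENNReal.ofReal_add (by positivity) (by positivity)]
    apply ENNReal.ofReal_le_ofReal
    apply le_of_eq
    field_simp
    ring
  choose v R hvR using fun m : ℕ => step ((1/2:ℝ)^m) (by positivity)
  have hdiff : ∀ m k, |v m - v k| ≤ (1/2:ℝ)^m + (1/2:ℝ)^k := by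
    intro m k
    obtain ⟨w, hw, hwr⟩ := exists_far h.hc hD hb (max (R m) (R k))
    have hdw := dF_pos ho hf hw
    have := (FF_two hu (v m) (v k) w (ρ := kap c τ * dF D w) (by positivity)).trans
      (add_le_add (hvR m w hw ((le_max_left _ _).trans hwr))
        (hvR k w hw ((le_max_right _ _).trans hwr)))
    rw [← ENNReal.ofReal_add (by positivity) (by positivity)] at this
    exact (ENNReal.ofReal_le_ofReal_iff (by positivity)).1 this
  have hlim : Filter.Tendsto (fun m : ℕ => (1/2:ℝ)^m) Filter.atTop (nhds 0) :=
    tendsto_pow_atTop_nhds_zero_of_lt_one (by norm_num) (by norm_num)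
  have hC : CauchySeq v := by
    apply cauchySeq_of_le_tendsto_0 (fun m : ℕ => 2 * (1/2:ℝ)^m)
    · intro m k N hm hk'
      rw [Real.dist_eq]
      have e1 : (1/2:ℝ)^m ≤ (1/2:ℝ)^N := pow_le_pow_of_le_one (by norm_num) (by norm_num) hm
      have e2 : (1/2:ℝ)^k ≤ (1/2:ℝ)^N := pow_le_pow_of_le_one (by norm_num) (by norm_num) hk'
      linarith [hdiff m k]
    · simpa using hlim.const_mul 2
  obtain ⟨a, ha⟩ := cauchySeq_tendsto_of_complete hC
  refine ⟨a, fun ε hε => ?_⟩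
  have h1 : ∀ m, |a - v m| ≤ (1/2:ℝ)^m := by
    intro m
    have t1 : Filter.Tendsto (fun k => |v k - v m|) Filter.atTop (nhds |a - v m|) :=
      (ha.sub_const _).abs
    have t2 : Filter.Tendsto (fun k => (1/2:ℝ)^k + (1/2:ℝ)^m) Filter.atTop
      (nhds (0 + (1/2:ℝ)^m)) := hlim.add_const _
    have := le_of_tendsto_of_tendsto' t1 t2 (fun k => hdiff k m)
    simpa using this
  obtain ⟨m, hm⟩ := exists_pow_lt_of_lt_one (show 0 < ε / 2 by positivity)
    (show (1/2:ℝ) < 1 by norm_num)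
  refine ⟨R m, fun w hw hwr => ?_⟩
  have hdw := dF_pos ho hf hw
  refine (FF_change hu a (v m) w (by positivity)).trans
    ((add_le_add (hvR m w hw hwr) (ENNReal.ofReal_le_ofReal (h1 m))).trans ?_)
  rw [← ENNReal.ofReal_add (by positivity) (by positivity)]
  apply ENNReal.ofReal_le_ofReal
  linarith

open MeasureTheory Metric Set
open scoped ENNReal NNReal BigOperators

/-! ### The weak type estimate -/

noncomputable def mu (c τ : ℝ) : ℝ := (1 + kap c τ)⁻¹
noncomputable def nu (c τ δ : ℝ) : ℝ := mu c τ ^ δ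

theorem mu_pos {n : ℕ} {c τ δ p : ℝ} (h : Hyp n c τ δ p) : 0 < mu c τ := by
  have := kap_pos h; unfold mu; positivity

theorem mu_lt {n : ℕ} {c τ δ p : ℝ} (h : Hyp n c τ δ p) : mu c τ < 1 := by
  have := kap_pos h; unfold mu; exact inv_lt_one_of_one_lt₀ (by linarith)

theorem nu_pos {n : ℕ} {c τ δ p : ℝ} (h : Hyp n c τ δ p) : 0 < nu c τ δ := by
  have := mu_pos h; unfold nu; positivity

theorem nu_lt {n : ℕ} {c τ δ p : ℝ} (h : Hyp n c τ δ p) : nu c τ δ < 1 := by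
  have := mu_pos h
  exact Real.rpow_lt_one this.le (mu_lt h) h.δ0

/-- The local term at scale `σ`. -/
noncomputable def loc (n : ℕ) (δ τ p : ℝ) (D : Set (Eucl n)) (u : Eucl n → ℝ) (σ : ℝ)
    (x : Eucl n) : ℝ≥0∞ := ∫⁻ y in D, (ball x σ).indicator (GG n δ τ p D u) y

theorem near_chain {n : ℕ} {c τ δ p : ℝ} (h : Hyp n c τ δ p) :
    ∃ C1 : ℝ, 0 < C1 ∧ ∀ (D : Set (Eucl n)), IsOpen D → (frontier D).Nonempty →
      ∀ (u : Eucl n → ℝ), Measurable u → ∀ (t r : ℝ), 0 < t → 0 < r →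
      ∀ (v : ℝ) (x : Eucl n) (z : ℝ → Eucl n) (S : ℝ), HalfCurve c D x z S → r ≤ S →
      ∀ J : ℕ, FF u v (z (r * mu c τ ^ J)) (kap c τ * (r * mu c τ ^ J)) ≤
        FF u v (z r) (kap c τ * r) + ∑ j ∈ Finset.range J,
          (ENNReal.ofReal (t * nu c τ δ ^ (j+1)) +
            ENNReal.ofReal (C1 * ((t * nu c τ δ ^ (j+1)) ^ (1 - p) *
              (r * mu c τ ^ (j+1)) ^ (δ * p - n))) *
              loc n δ τ p D u (2 * (r * mu c τ ^ (j+1))) x) := by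
  obtain ⟨C1, hC1, H⟩ := step_bound h
  refine ⟨C1, hC1, ?_⟩
  intro D ho hf u hu t r ht hr v x z S hz hrS J
  have hk := kap_pos h
  have hk1 := kap_lt_one h
  have hmu := mu_pos h
  have hmu1 := mu_lt h
  have hnu := nu_pos h
  induction J with
  | zero => simp
  | succ J ih =>
    rw [Finset.sum_range_succ, ← add_assoc]
    refine le_trans ?_ (add_le_add_left ih _)
    rw [← add_assoc]
    set σ := r * mu c τ ^ (J+1) with hσd
    set σ' := r * mu c τ ^ J with hσ'd
    have hσ : 0 < σ := by positivity
    have hσ' : 0 < σ' := by positivity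
    have hσσ : σ' = (1 + kap c τ) * σ := by
      rw [hσd, hσ'd, pow_succ]
      unfold mu
      field_simp
    have hle : σ ≤ σ' := by rw [hσσ]; nlinarith
    have hS : σ' ≤ S := by
      refine le_trans ?_ hrS
      have : mu c τ ^ J ≤ 1 := pow_le_one₀ hmu.le hmu1.le
      rw [hσ'd]; nlinarith
    obtain ⟨d1, d2, d3⟩ := half_dist h hz hσ hle hσσ.le hS
    obtain ⟨e1, e2⟩ := hz.1 σ ⟨hσ.le, hle.trans hS⟩
    refine (H D hf u hu v (z σ) (z σ') σ σ' (t * nu c τ δ ^ (J+1)) hσ hσ' (by positivity) e2 d1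
      (by linarith)).trans ?_
    gcongr
    have hsubD : ball (z σ) (kap c τ * σ) ⊆ D := by
      apply ball_subD ho e1 (by positivity)
      have h1 := kap_le h
      have h2 := h.τ1
      have h3 := dF_nonneg D (z σ)
      calc kap c τ * σ ≤ kap c τ * (3 * c * dF D (z σ)) := by gcongr
        _ = τ / 8 * dF D (z σ) := by linear_combination dF D (z σ) / 8 * h1
        _ ≤ 1 * dF D (z σ) := by gcongr; linarith
        _ = _ := one_mul _
    have hsub : ball (z σ) (kap c τ * σ) ⊆ ball x (2 * σ) := by
      apply ball_subset_ball'
      have := hz.2.1 σ ⟨hσ.le, hle.trans hS⟩ 0 ⟨le_rfl, hσ.le.trans (hle.trans hS)⟩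
      rw [hz.2.2.1 0 (dF_nonneg D x), sub_zero, abs_of_pos hσ] at this
      nlinarith
    unfold loc
    rw [lintegral_indicator measurableSet_ball, Measure.restrict_restrict measurableSet_ball]
    exact lintegral_mono_set (subset_inter hsub hsubD)

/-- The majorant. -/
noncomputable def HH (n : ℕ) (c τ δ p C t r : ℝ) (D : Set (Eucl n)) (u : Eucl n → ℝ)
    (x : Eucl n) : ℝ≥0∞ :=
  ENNReal.ofReal (C * (t ^ (1 - p) * r ^ (δ * p))) * GG n δ τ p D u x +
    ∑' j : ℕ, ENNReal.ofReal (C * ((t * nu c τ δ ^ (j+1)) ^ (1 - p) *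
              (r * mu c τ ^ (j+1)) ^ (δ * p - n))) *
              loc n δ τ p D u (2 * (r * mu c τ ^ (j+1))) x

theorem pointwise_bound {n : ℕ} {c τ δ p : ℝ} (h : Hyp n c τ δ p) :
    ∃ C : ℝ, 0 < C ∧ ∀ (D : Set (Eucl n)), IsJohnDomain n c D → ¬ Bornology.IsBounded D →
      ∀ (u : Eucl n → ℝ), Measurable u → ∀ a : ℝ, AtInf c τ D u a →
      ∀ (t r : ℝ), 0 < t → 0 < r →
      fracEnergyTau n δ τ p D u ≤ ENNReal.ofReal (t ^ p * r ^ ((n:ℝ) - δ * p)) →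
      ∀ x ∈ D, ENNReal.ofReal |u x - a| ≤ ENNReal.ofReal (C * t) + HH n c τ δ p C t r D u x := by
  obtain ⟨C0, hC0, H0⟩ := start_bound h
  obtain ⟨C1, hC1, H1⟩ := near_chain h
  obtain ⟨C4, hC4, H4⟩ := far_connect h
  have hk := kap_pos h
  have hk1 := kap_lt_one h
  have hmu := mu_pos h
  have hmu1 := mu_lt h
  have hnu := nu_pos h
  have hnu1 := nu_lt h
  set ν := nu c τ δ with hν
  set μ := mu c τ with hμ
  have h1ν : 0 < 1 - ν := by linarith
  refine ⟨2 + C4 + (1 - ν)⁻¹ + C0 + C1, by positivity, ?_⟩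
  intro D hD hb u hu a ha t r ht hr hE x hx
  set C := 2 + C4 + (1 - ν)⁻¹ + C0 + C1 with hC
  have ho := hD.1
  have hf := frontier_ne h.hc hD hb
  have hdx := dF_pos ho hf hx
  obtain ⟨R, hR⟩ := ha t ht
  obtain ⟨w, hw, hwR⟩ := exists_far h.hc hD hb (max R (3 * r))
  have hw1 : R ≤ dF D w := (le_max_left _ _).trans hwR
  have hw2 : 3 * r ≤ dF D w := (le_max_right _ _).trans hwR
  obtain ⟨S, S', z, z', a1, a2, a3, a4, a5⟩ := exists_halves h.hc hD hx hw
  have hrS : r ≤ S := by linarith [a2.2.2.2]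
  have b1 := H4 D ho hf u hu t r ht hr hE a x w z z' S S' a1 a2 a3 a4 a5 r le_rfl hrS (by linarith)
  obtain ⟨J, hJ⟩ := exists_pow_lt_of_lt_one (show 0 < dF D x / r by positivity) hmu1
  rw [lt_div_iff₀ hr, mul_comm] at hJ
  have b2 := H1 D ho hf u hu t r ht hr a x z S a1 hrS J
  rw [a1.2.2.1 _ hJ.le] at b2
  have hμJ : 0 < r * μ ^ J := by positivity
  have b3 := H0 D u hu a x x (r * μ ^ J) t hμJ ht (by
    intro y' hy'
    rw [mem_ball, dist_comm] at hy'
    have : 0 < kap c τ * (r * μ ^ J) := by positivity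
    refine ⟨mem_tauBall h.τ0 hf (hy'.trans_le ?_), by linarith⟩
    have e1 : kap c τ ≤ τ := by
      have := kap_le h; have := h.hc; nlinarith
    have := h.τ0
    gcongr)
  have b4 := hR w hw hw1
  have b5 : ENNReal.ofReal (C0 * (t ^ (1 - p) * (r * μ ^ J) ^ (δ * p))) ≤
      ENNReal.ofReal (C * (t ^ (1 - p) * r ^ (δ * p))) := by
    have e2 : μ ^ J ≤ 1 := pow_le_one₀ hmu.le hmu1.le
    have e3 : r * μ ^ J ≤ r := by nlinarith
    have e4 : 0 ≤ δ * p := mul_nonneg h.δ0.le (by linarith [h.hp])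
    have e5 : 0 < (1 - ν)⁻¹ := by positivity
    gcongr
    linarith
  have b6 : ∑ j ∈ Finset.range J,
          (ENNReal.ofReal (t * ν ^ (j+1)) +
            ENNReal.ofReal (C1 * ((t * ν ^ (j+1)) ^ (1 - p) *
              (r * μ ^ (j+1)) ^ (δ * p - n))) *
              loc n δ τ p D u (2 * (r * μ ^ (j+1))) x) ≤ ENNReal.ofReal (t * (1 - ν)⁻¹) +
        ∑' j : ℕ, ENNReal.ofReal (C * ((t * ν ^ (j+1)) ^ (1 - p) *
              (r * μ ^ (j+1)) ^ (δ * p - n))) *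
              loc n δ τ p D u (2 * (r * μ ^ (j+1))) x := by
    rw [Finset.sum_add_distrib]
    gcongr
    · rw [← ENNReal.ofReal_sum_of_nonneg (fun j _ => by positivity)]
      apply ENNReal.ofReal_le_ofReal
      rw [← Finset.mul_sum]
      gcongr
      have := Summable.sum_le_tsum (f := fun j : ℕ => ν ^ j) (Finset.range J)
        (fun j _ => by positivity) (summable_geometric_of_lt_one hnu.le hnu1)
      rw [tsum_geometric_of_lt_one hnu.le hnu1] at this
      refine le_trans (Finset.sum_le_sum fun j _ => ?_) this
      exact pow_le_pow_of_le_one hnu.le hnu1.le (Nat.le_succ j)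
    · refine le_trans (Finset.sum_le_sum fun j _ => ?_) (ENNReal.sum_le_tsum (Finset.range J))
      have e5 : 0 < (1 - ν)⁻¹ := by positivity
      gcongr
      linarith
  unfold HH
  calc ENNReal.ofReal |u x - a| ≤ _ := b3
    _ ≤ (((ENNReal.ofReal t + ENNReal.ofReal (C4 * t)) + (ENNReal.ofReal (t * (1 - ν)⁻¹) +
        ∑' j : ℕ, ENNReal.ofReal (C * ((t * ν ^ (j+1)) ^ (1 - p) *
              (r * μ ^ (j+1)) ^ (δ * p - n))) *
              loc n δ τ p D u (2 * (r * μ ^ (j+1))) x)) + ENNReal.ofReal t) +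
        ENNReal.ofReal (C * (t ^ (1 - p) * r ^ (δ * p))) * GG n δ τ p D u x := by
        gcongr
        exact b2.trans (add_le_add (b1.trans (add_le_add_left b4 _)) b6)
    _ = ENNReal.ofReal ((t + C4 * t + t * (1 - ν)⁻¹ + t)) +
        (ENNReal.ofReal (C * (t ^ (1 - p) * r ^ (δ * p))) * GG n δ τ p D u x +
         ∑' j : ℕ, ENNReal.ofReal (C * ((t * ν ^ (j+1)) ^ (1 - p) *
              (r * μ ^ (j+1)) ^ (δ * p - n))) *
              loc n δ τ p D u (2 * (r * μ ^ (j+1))) x) := by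
        rw [ENNReal.ofReal_add (p := t + C4 * t + t * (1 - ν)⁻¹) (by positivity) (by positivity),
          ENNReal.ofReal_add (p := t + C4 * t) (by positivity) (by positivity),
          ENNReal.ofReal_add (p := t) (by positivity) (by positivity)]
        ring
    _ ≤ _ := by
        gcongr
        rw [hC]
        have : 0 < C0 * t := by positivity
        have : 0 < C1 * t := by positivity
        linarith

theorem measurable_loc {n : ℕ} {δ τ p : ℝ} {D : Set (Eucl n)} {u : Eucl n → ℝ}
    (hu : Measurable u) (σ : ℝ) : Measurable (fun q : Eucl n × Eucl n =>
      (ball q.1 σ).indicator (GG n δ τ p D u) q.2) := by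
  have hms : MeasurableSet {q : Eucl n × Eucl n | dist q.2 q.1 < σ} :=
    measurableSet_lt (measurable_snd.dist measurable_fst) measurable_const
  exact ((measurable_GG (δ := δ) (τ := τ) (p := p) (D := D) hu).comp measurable_snd).indicator hms

theorem lintegral_loc {n : ℕ} {δ τ p : ℝ} {D : Set (Eucl n)} {u : Eucl n → ℝ}
    (hu : Measurable u) {σ : ℝ} (hσ : 0 < σ) :
    ∫⁻ x in D, loc n δ τ p D u σ x ≤
      ENNReal.ofReal (om n * σ ^ (n:ℝ)) * fracEnergyTau n δ τ p D u := by
  unfold loc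
  rw [lintegral_lintegral_swap (measurable_loc hu σ).aemeasurable, energy_eq,
    ← lintegral_const_mul' _ _ ENNReal.ofReal_ne_top]
  apply lintegral_mono
  intro y
  have : ∀ x, (ball x σ).indicator (GG n δ τ p D u) y =
      (ball y σ).indicator (fun _ => GG n δ τ p D u y) x := by
    intro x
    by_cases hxy : dist x y < σ
    · rw [indicator_of_mem (by rwa [mem_ball, dist_comm]), indicator_of_mem (by rwa [mem_ball])]
    · rw [indicator_of_notMem (by rwa [mem_ball, dist_comm]), indicator_of_notMem (by rwa [mem_ball])]
  simp_rw [this]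
  rw [lintegral_indicator measurableSet_ball, setLIntegral_const, mul_comm, ← vol_ball y hσ]
  exact mul_le_mul' (Measure.restrict_apply_le _ _) le_rfl

theorem weak_type {n : ℕ} {c τ δ p : ℝ} (h : Hyp n c τ δ p) :
    ∃ C : ℝ, 0 < C ∧ ∀ (D : Set (Eucl n)), IsJohnDomain n c D → ¬ Bornology.IsBounded D →
      ∀ (u : Eucl n → ℝ), Measurable u → ∀ a : ℝ, AtInf c τ D u a →
      ∀ (t r : ℝ), 0 < t → 0 < r →
      fracEnergyTau n δ τ p D u ≤ ENNReal.ofReal (t ^ p * r ^ ((n:ℝ) - δ * p)) →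
      volume (D ∩ {x | C * t < |u x - a|}) ≤ ENNReal.ofReal (C * r ^ (n:ℝ)) := by
  obtain ⟨C, hC, H⟩ := pointwise_bound h
  have hmu := mu_pos h
  have hmu1 := mu_lt h
  have hnu := nu_pos h
  have hnu1 := nu_lt h
  set ν := nu c τ δ with hν
  set μ := mu c τ with hμ
  have h1ν : 0 < 1 - ν := by linarith
  have hom := om_pos n
  refine ⟨C + 1 + C * (1 + om n * 2 ^ (n:ℝ) * (1 - ν)⁻¹), by positivity, ?_⟩
  intro D hD hb u hu a ha t r ht hr hE
  set K := C * (1 + om n * 2 ^ (n:ℝ) * (1 - ν)⁻¹) with hK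
  have hK0 : 0 < K := by positivity
  have hmeasGG := measurable_GG (δ := δ) (τ := τ) (p := p) (D := D) hu
  have hmeasloc : ∀ σ, Measurable (loc n δ τ p D u σ) := fun σ =>
    (measurable_loc hu σ).lintegral_prod_right'
  have hmeasH : Measurable (HH n c τ δ p C t r D u) := by
    unfold HH
    exact (hmeasGG.const_mul _).add (Measurable.tsum fun j => (hmeasloc _).const_mul _)
  have hint : ∫⁻ x in D, HH n c τ δ p C t r D u x ≤
      ENNReal.ofReal (K * (t ^ (1 - p) * r ^ (δ * p))) * fracEnergyTau n δ τ p D u := by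
    unfold HH
    rw [lintegral_add_left (hmeasGG.const_mul _), lintegral_const_mul' _ _ ENNReal.ofReal_ne_top,
      ← energy_eq, lintegral_tsum (fun j => ((hmeasloc _).const_mul _).aemeasurable)]
    have hterm : ∀ j : ℕ, ∫⁻ x in D, ENNReal.ofReal (C * ((t * ν ^ (j+1)) ^ (1 - p) *
              (r * μ ^ (j+1)) ^ (δ * p - n))) *
              loc n δ τ p D u (2 * (r * μ ^ (j+1))) x ≤
        ENNReal.ofReal (C * om n * 2 ^ (n:ℝ) * (t ^ (1 - p) * r ^ (δ * p)) * ν ^ j) *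
          fracEnergyTau n δ τ p D u := by
      intro j
      rw [lintegral_const_mul' _ _ ENNReal.ofReal_ne_top]
      have hσ : 0 < r * μ ^ (j+1) := by positivity
      calc _ ≤ ENNReal.ofReal (C * ((t * ν ^ (j+1)) ^ (1 - p) *
              (r * μ ^ (j+1)) ^ (δ * p - n))) *
              (ENNReal.ofReal (om n * (2 * (r * μ ^ (j+1))) ^ (n:ℝ)) *
                fracEnergyTau n δ τ p D u) := by
            gcongr
            exact lintegral_loc hu (by positivity)
        _ ≤ _ := by
            rw [← mul_assoc, ← ENNReal.ofReal_mul (by positivity)]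
            refine mul_le_mul' (ENNReal.ofReal_le_ofReal ?_) le_rfl
            have f1 : (r * μ ^ (j+1)) ^ (δ * p - n) * (r * μ ^ (j+1)) ^ (n:ℝ) =
                r ^ (δ * p) * (ν ^ (j+1)) ^ p := by
              rw [← Real.rpow_add hσ, sub_add_cancel, Real.mul_rpow hr.le (by positivity)]
              congr 1
              rw [Real.rpow_mul (by positivity), ← Real.rpow_natCast, ← Real.rpow_mul hmu.le,
                mul_comm _ δ, Real.rpow_mul hmu.le, Real.rpow_natCast]
              rfl
            have f2 : (ν ^ (j+1)) ^ (1 - p) * (ν ^ (j+1)) ^ p = ν ^ (j+1) := by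
              rw [← Real.rpow_add (by positivity)]; simp
            rw [Real.mul_rpow ht.le (by positivity), Real.mul_rpow (by norm_num) hσ.le]
            calc C * (t ^ (1 - p) * (ν ^ (j+1)) ^ (1 - p) * (r * μ ^ (j+1)) ^ (δ * p - n)) *
                  (om n * (2 ^ (n:ℝ) * (r * μ ^ (j+1)) ^ (n:ℝ)))
                = C * om n * 2 ^ (n:ℝ) * (t ^ (1 - p) * (ν ^ (j+1)) ^ (1 - p)) *
                  ((r * μ ^ (j+1)) ^ (δ * p - n) * (r * μ ^ (j+1)) ^ (n:ℝ)) := by ring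
              _ = C * om n * 2 ^ (n:ℝ) * (t ^ (1 - p) * r ^ (δ * p)) *
                  ((ν ^ (j+1)) ^ (1 - p) * (ν ^ (j+1)) ^ p) := by rw [f1]; ring
              _ ≤ _ := by
                rw [f2]
                gcongr _ * ?_
                exact pow_le_pow_of_le_one hnu.le hnu1.le (Nat.le_succ j)
    calc _ ≤ ENNReal.ofReal (C * (t ^ (1 - p) * r ^ (δ * p))) * fracEnergyTau n δ τ p D u +
          ∑' j : ℕ, ENNReal.ofReal (C * om n * 2 ^ (n:ℝ) * (t ^ (1 - p) * r ^ (δ * p)) * ν ^ j) *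
          fracEnergyTau n δ τ p D u := by
          gcongr with j
          exact hterm j
      _ = _ := by
          rw [ENNReal.tsum_mul_right, ← add_mul, ← ENNReal.ofReal_tsum_of_nonneg
            (fun j => by positivity)
            ((summable_geometric_of_lt_one hnu.le hnu1).mul_left _), tsum_mul_left,
            tsum_geometric_of_lt_one hnu.le hnu1, ← ENNReal.ofReal_add (by positivity)
            (by positivity)]
          congr 2
          rw [hK]; ring
  have hint2 : ∫⁻ x in D, HH n c τ δ p C t r D u x ≤ ENNReal.ofReal (t * (K * r ^ (n:ℝ))) := by
    refine hint.trans ?_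
    calc _ ≤ ENNReal.ofReal (K * (t ^ (1 - p) * r ^ (δ * p))) *
          ENNReal.ofReal (t ^ p * r ^ ((n:ℝ) - δ * p)) := by gcongr
      _ = _ := by
        rw [← ENNReal.ofReal_mul (by positivity)]
        have g1 : t ^ (1 - p) * t ^ p = t := by rw [← Real.rpow_add ht]; simp
        have g2 : r ^ (δ * p) * r ^ ((n:ℝ) - δ * p) = r ^ (n:ℝ) := by
          rw [← Real.rpow_add hr]; congr 1; ring
        congr 1
        calc _ = K * (t ^ (1 - p) * t ^ p) * (r ^ (δ * p) * r ^ ((n:ℝ) - δ * p)) := by ring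
          _ = _ := by rw [g1, g2]; ring
  have hmk := mul_meas_ge_le_lintegral₀ (μ := volume.restrict D) hmeasH.aemeasurable
    (ENNReal.ofReal t)
  have hsub : D ∩ {x | (C + 1 + K) * t < |u x - a|} ⊆
      D ∩ {x | ENNReal.ofReal t ≤ HH n c τ δ p C t r D u x} := by
    rintro x ⟨hx, hx2⟩
    refine ⟨hx, ?_⟩
    have hx3 : (C + 1 + K) * t < |u x - a| := hx2
    change ENNReal.ofReal t ≤ HH n c τ δ p C t r D u x
    by_contra hcon
    push Not at hcon
    have k1 := H D hD hb u hu a ha t r ht hr hE x hx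
    have k2 : ENNReal.ofReal |u x - a| ≤ ENNReal.ofReal (C * t + t) := by
      rw [ENNReal.ofReal_add (by positivity) ht.le]
      exact k1.trans (add_le_add_right hcon.le _)
    rw [ENNReal.ofReal_le_ofReal_iff (by positivity)] at k2
    have : 0 < K * t := by positivity
    linarith
  have hmeasSet : MeasurableSet {x | ENNReal.ofReal t ≤ HH n c τ δ p C t r D u x} :=
    measurableSet_le measurable_const hmeasH
  have hvol : volume (D ∩ {x | ENNReal.ofReal t ≤ HH n c τ δ p C t r D u x}) ≤
      ENNReal.ofReal (K * r ^ (n:ℝ)) := by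
    rw [Measure.restrict_apply hmeasSet] at hmk
    have h5 := hmk.trans hint2
    rw [ENNReal.ofReal_mul ht.le, inter_comm] at h5
    exact (ENNReal.mul_le_mul_iff_right (by simpa using ht) ENNReal.ofReal_ne_top).1 h5
  refine (measure_mono hsub).trans (hvol.trans ?_)
  gcongr
  linarith

open MeasureTheory Metric Set
open scoped ENNReal NNReal BigOperators

/-- Dyadic truncation. -/
noncomputable def phi (k : ℤ) (y : ℝ) : ℝ := min y (2 ^ (k+1)) - min y (2 ^ k)

theorem two_zpow_le (k : ℤ) : (2:ℝ) ^ k ≤ 2 ^ (k+1) :=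
  zpow_le_zpow_right₀ (by norm_num) (by omega)

theorem phi_mono (k : ℤ) {y y' : ℝ} (hy : y ≤ y') : phi k y ≤ phi k y' := by
  have := two_zpow_le k
  unfold phi
  simp only [min_def]
  split_ifs <;> linarith

theorem phi_bd (k : ℤ) {y : ℝ} (hy : 0 ≤ y) : |phi k y| ≤ y := by
  have := two_zpow_le k
  have h0 : (0:ℝ) < 2 ^ k := by positivity
  unfold phi
  rw [abs_le]
  simp only [min_def]
  constructor <;> split_ifs <;> linarith

theorem phi_top (k : ℤ) {y : ℝ} (hy : 2 ^ (k+1) ≤ y) : phi k y = 2 ^ k := by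
  have := two_zpow_le k
  unfold phi
  rw [min_eq_right hy, min_eq_right (this.trans hy), zpow_add₀ (by norm_num)]
  ring

theorem measurable_phi (k : ℤ) : Measurable (phi k) :=
  (measurable_id.min measurable_const).sub (measurable_id.min measurable_const)

theorem phi_sum (m : ℤ) (M : ℕ) (y : ℝ) :
    ∑ k ∈ Finset.Ico m (m + M), phi k y = min y (2 ^ (m + M)) - min y (2 ^ m) := by
  induction M with
  | zero => simp
  | succ M ih =>
    have : Finset.Ico m (m + (M + 1 : ℕ)) = insert (m + M) (Finset.Ico m (m + M)) := by
      ext k; simp; omega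
    rw [this, Finset.sum_insert (by simp), ih]
    unfold phi
    push_cast
    rw [add_assoc]
    ring

theorem phi_diff_sum (F : Finset ℤ) {y y' : ℝ} (hy : y' ≤ y) :
    ∑ k ∈ F, |phi k y - phi k y'| ≤ y - y' := by
  obtain ⟨m, M, hF⟩ : ∃ (m : ℤ) (M : ℕ), F ⊆ Finset.Ico m (m + M) := by
    obtain ⟨N, hN⟩ : ∃ N : ℕ, ∀ k ∈ F, k.natAbs ≤ N :=
      ⟨F.sup Int.natAbs, fun k hk => Finset.le_sup (f := Int.natAbs) hk⟩
    refine ⟨-N, 2 * N + 1, fun k hk => ?_⟩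
    have := hN k hk
    simp only [Finset.mem_Ico]
    omega
  calc _ ≤ ∑ k ∈ Finset.Ico m (m + M), |phi k y - phi k y'| :=
        Finset.sum_le_sum_of_subset_of_nonneg hF (fun _ _ _ => abs_nonneg _)
    _ = ∑ k ∈ Finset.Ico m (m + M), (phi k y - phi k y') :=
        Finset.sum_congr rfl fun k _ => abs_of_nonneg (sub_nonneg.2 (phi_mono k hy))
    _ ≤ _ := by
        rw [Finset.sum_sub_distrib, phi_sum, phi_sum]
        have : (2:ℝ) ^ m ≤ 2 ^ (m + M) := zpow_le_zpow_right₀ (by norm_num) (by omega)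
        simp only [min_def]
        split_ifs <;> linarith

theorem phi_diff_tsum (y y' : ℝ) :
    ∑' k : ℤ, ENNReal.ofReal |phi k y - phi k y'| ≤ ENNReal.ofReal |y - y'| := by
  rw [ENNReal.tsum_eq_iSup_sum]
  apply iSup_le
  intro F
  rw [← ENNReal.ofReal_sum_of_nonneg (fun _ _ => abs_nonneg _)]
  apply ENNReal.ofReal_le_ofReal
  rcases le_total y' y with h | h
  · rw [abs_of_nonneg (sub_nonneg.2 h)]; exact phi_diff_sum F h
  · rw [abs_sub_comm y, abs_of_nonneg (sub_nonneg.2 h)]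
    simp_rw [abs_sub_comm (phi _ y)]
    exact phi_diff_sum F h

theorem tsum_rpow_le {ι : Type*} (x : ι → ℝ≥0∞) {s : ℝ} (hs : 1 ≤ s) :
    ∑' k, x k ^ s ≤ (∑' k, x k) ^ s := by
  classical
  rw [ENNReal.tsum_eq_iSup_sum]
  apply iSup_le
  intro F
  refine le_trans ?_ (ENNReal.rpow_le_rpow (ENNReal.sum_le_tsum F) (by linarith))
  induction F using Finset.induction_on with
  | empty => simp
  | insert k F hk ih =>
    rw [Finset.sum_insert hk, Finset.sum_insert hk]
    exact (add_le_add le_rfl ih).trans (ENNReal.add_rpow_le_rpow_add _ _ hs)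

/-- The truncations of `u`. -/
noncomputable def trunc {n : ℕ} (u : Eucl n → ℝ) (a : ℝ) (k : ℤ) (x : Eucl n) : ℝ :=
  phi k |u x - a|

theorem measurable_trunc {n : ℕ} {u : Eucl n → ℝ} (hu : Measurable u) (a : ℝ) (k : ℤ) :
    Measurable (trunc u a k) :=
  (measurable_phi k).comp (measurable_norm.comp (hu.sub measurable_const))

theorem atInf_trunc {n : ℕ} {c τ : ℝ} {D : Set (Eucl n)} {u : Eucl n → ℝ} {a : ℝ}
    (h : AtInf c τ D u a) (k : ℤ) : AtInf c τ D (trunc u a k) 0 := by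
  intro ε hε
  obtain ⟨R, hR⟩ := h ε hε
  refine ⟨R, fun w hw hRw => le_trans ?_ (hR w hw hRw)⟩
  unfold FF
  refine mul_le_mul' le_rfl (lintegral_mono fun y => ENNReal.ofReal_le_ofReal ?_)
  rw [sub_zero]
  exact phi_bd k (abs_nonneg _)

theorem kernel_trunc {n : ℕ} {δ p : ℝ} (hp : 1 ≤ p) (u : Eucl n → ℝ) (a : ℝ) (x y : Eucl n) :
    ∑' k, fracKernel n δ p (trunc u a k) x y ≤ fracKernel n δ p u x y := by
  have hp0 : 0 ≤ p := by linarith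
  have key : ∀ v : Eucl n → ℝ, fracKernel n δ p v x y =
      ENNReal.ofReal |v x - v y| ^ p * ENNReal.ofReal ((dist x y ^ ((n : ℝ) + δ * p))⁻¹) := by
    intro v
    unfold fracKernel
    rw [div_eq_mul_inv, ENNReal.ofReal_mul (by positivity),
      ENNReal.ofReal_rpow_of_nonneg (abs_nonneg _) hp0]
  simp_rw [key]
  rw [ENNReal.tsum_mul_right]
  refine mul_le_mul' ?_ le_rfl
  refine (tsum_rpow_le _ hp).trans (ENNReal.rpow_le_rpow ?_ hp0)
  refine (phi_diff_tsum _ _).trans (ENNReal.ofReal_le_ofReal ?_)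
  refine (abs_abs_sub_abs_le _ _).trans ?_
  rw [sub_sub_sub_cancel_right]

theorem measurable_kernel_right {n : ℕ} {δ p : ℝ} {v : Eucl n → ℝ} (hv : Measurable v)
    (x : Eucl n) : Measurable fun z => fracKernel n δ p v x z := by
  unfold fracKernel
  apply Measurable.ennreal_ofReal
  apply Measurable.div
  · exact (measurable_norm.comp (measurable_const.sub hv)).pow_const p
  · exact (measurable_const.dist measurable_id).pow_const _

theorem GG_trunc {n : ℕ} {δ τ p : ℝ} (hp : 1 ≤ p) {D : Set (Eucl n)} {u : Eucl n → ℝ}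
    (hu : Measurable u) (a : ℝ) (x : Eucl n) :
    ∑' k, GG n δ τ p D (trunc u a k) x ≤ GG n δ τ p D u x := by
  have hm : ∀ k, AEMeasurable (fun z => fracKernel n δ p (trunc u a k) x z)
      (volume.restrict (tauBall n τ D x)) := fun k =>
    (measurable_kernel_right (measurable_trunc hu a k) x).aemeasurable
  unfold GG
  calc _ = ∫⁻ z in tauBall n τ D x, ∑' k, fracKernel n δ p (trunc u a k) x z :=
        (lintegral_tsum hm).symm
    _ ≤ _ := lintegral_mono fun y => kernel_trunc hp u a x y

theorem energy_trunc {n : ℕ} {δ τ p : ℝ} (hp : 1 ≤ p) {D : Set (Eucl n)} {u : Eucl n → ℝ}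
    (hu : Measurable u) (a : ℝ) :
    ∑' k, fracEnergyTau n δ τ p D (trunc u a k) ≤ fracEnergyTau n δ τ p D u := by
  have hm : ∀ k, AEMeasurable (GG n δ τ p D (trunc u a k)) (volume.restrict D) := fun k =>
    (measurable_GG (measurable_trunc hu a k)).aemeasurable
  calc _ = ∑' k, ∫⁻ x in D, GG n δ τ p D (trunc u a k) x := by simp_rw [energy_eq]
    _ = ∫⁻ x in D, ∑' k, GG n δ τ p D (trunc u a k) x := (lintegral_tsum hm).symm
    _ ≤ ∫⁻ x in D, GG n δ τ p D u x := lintegral_mono fun x => GG_trunc hp hu a x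
    _ = _ := (energy_eq D u).symm

/-- Level set bound. -/
theorem level_bound {n : ℕ} {c τ δ p C : ℝ} (h : Hyp n c τ δ p) (hC : 0 < C)
    {D : Set (Eucl n)} {w : Eucl n → ℝ}
    (H : ∀ (t r : ℝ), 0 < t → 0 < r →
      fracEnergyTau n δ τ p D w ≤ ENNReal.ofReal (t ^ p * r ^ ((n:ℝ) - δ * p)) →
      volume (D ∩ {x | C * t < |w x - 0|}) ≤ ENNReal.ofReal (C * r ^ (n:ℝ)))
    (hE : fracEnergyTau n δ τ p D w < ⊤) {t : ℝ} (ht : 0 < t) :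
    ENNReal.ofReal (t ^ ((n:ℝ) * p / ((n:ℝ) - δ * p))) * volume (D ∩ {x | C * t < |w x - 0|}) ≤
      ENNReal.ofReal C * fracEnergyTau n δ τ p D w ^ ((n:ℝ) / ((n:ℝ) - δ * p)) := by
  have hd : 0 < (n:ℝ) - δ * p := by linarith [h.hpn]
  have hn0 : 0 < (n:ℝ) := by have := h.hn; positivity
  set E := fracEnergyTau n δ τ p D w with hEdef
  rcases eq_or_ne E 0 with h0 | h0
  · have : volume (D ∩ {x | C * t < |w x - 0|}) = 0 := by
      apply le_antisymm _ zero_le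
      apply ENNReal.le_of_forall_pos_le_add
      intro ε hε _
      have hε' : (0:ℝ) < ε := hε
      have := H t ((ε / C) ^ (1 / (n:ℝ))) ht (by positivity) (by rw [h0]; exact zero_le)
      rw [← Real.rpow_mul (by positivity), one_div_mul_cancel hn0.ne', Real.rpow_one,
        mul_div_cancel₀ _ hC.ne'] at this
      simpa using this
    rw [this]; simp
  · have he : 0 < E.toReal := ENNReal.toReal_pos h0 hE.ne
    set e := E.toReal with hedef
    have hEe : E = ENNReal.ofReal e := (ENNReal.ofReal_toReal hE.ne).symm
    have hq : 0 < e / t ^ p := by positivity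
    have := H t ((e / t ^ p) ^ (1 / ((n:ℝ) - δ * p))) ht (by positivity) (by
      rw [← Real.rpow_mul hq.le, one_div_mul_cancel hd.ne', Real.rpow_one,
        mul_div_cancel₀ _ (by positivity), hEe])
    refine (mul_le_mul' le_rfl this).trans ?_
    rw [hEe, ENNReal.ofReal_rpow_of_pos he, ← ENNReal.ofReal_mul (by positivity),
      ← ENNReal.ofReal_mul (by positivity)]
    apply ENNReal.ofReal_le_ofReal
    rw [← Real.rpow_mul hq.le, one_div_mul_eq_div, Real.div_rpow he.le (by positivity),
      ← Real.rpow_mul ht.le, mul_div_assoc' p, mul_comm p]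
    have : 0 < t ^ ((n:ℝ) * p / ((n:ℝ) - δ * p)) := by positivity
    apply le_of_eq
    field_simp

theorem dyadic_bound {q : ℝ} (hq : 0 < q) (v : ℝ) :
    ENNReal.ofReal (|v| ^ q) ≤
      ∑' k : ℤ, ENNReal.ofReal (((2:ℝ) ^ (k + 2)) ^ q) *
        {w : ℝ | (2:ℝ) ^ (k+1) ≤ |w|}.indicator (fun _ => 1) v := by
  rcases eq_or_ne v 0 with rfl | hv
  · rw [abs_zero, Real.zero_rpow hq.ne']; simp
  obtain ⟨m, hm1, hm2⟩ := exists_mem_Ico_zpow (abs_pos.2 hv) (by norm_num : (1:ℝ) < 2)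
  refine le_trans ?_ (ENNReal.le_tsum (m - 1))
  rw [indicator_of_mem (by simpa using hm1), mul_one]
  apply ENNReal.ofReal_le_ofReal
  apply Real.rpow_le_rpow (abs_nonneg _) _ hq.le
  have : m - 1 + 2 = m + 1 := by ring
  rw [this]
  exact hm2.le

theorem sobolev {n : ℕ} {c τ δ p : ℝ} (h : Hyp n c τ δ p) :
    ∃ C : ℝ, 0 < C ∧
      ∀ D : Set (Eucl n), IsJohnDomain n c D → ¬ Bornology.IsBounded D →
        ∀ u : Eucl n → ℝ, Measurable u → fracEnergyTau n δ τ p D u < ⊤ →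
          (⨅ a : ℝ, ∫⁻ x in D, ENNReal.ofReal
              (|u x - a| ^ ((n:ℝ) * p / ((n:ℝ) - δ * p))) ∂volume)
            ≤ ENNReal.ofReal C * fracEnergyTau n δ τ p D u ^ ((n:ℝ) / ((n:ℝ) - δ * p)) := by
  obtain ⟨C, hC, H⟩ := weak_type h
  have hd : 0 < (n:ℝ) - δ * p := by linarith [h.hpn]
  have hn0 : 0 < (n:ℝ) := by have := h.hn; positivity
  have hp0 : 0 < p := by linarith [h.hp]
  have hδ0 := h.δ0
  set q := (n:ℝ) * p / ((n:ℝ) - δ * p) with hq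
  set s := (n:ℝ) / ((n:ℝ) - δ * p) with hs
  have hq0 : 0 < q := by positivity
  have hs1 : 1 ≤ s := by
    rw [hs, le_div_iff₀ hd]
    have : 0 < δ * p := by positivity
    linarith
  refine ⟨(8 * C) ^ q * C, by positivity, ?_⟩
  intro D hD hb u hu hE
  obtain ⟨a, ha⟩ := exists_atInf h hD hb hu hE
  refine iInf_le_of_le a ?_
  have hDm : MeasurableSet D := hD.1.measurableSet
  have hset : ∀ k : ℤ, MeasurableSet {w : ℝ | (2:ℝ) ^ (k+1) ≤ |w|} := fun k =>
    measurableSet_le measurable_const measurable_norm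
  have hset' : ∀ k : ℤ, MeasurableSet {x : Eucl n | (2:ℝ) ^ (k+1) ≤ |u x - a|} := fun k =>
    measurableSet_le measurable_const (measurable_norm.comp (hu.sub measurable_const))
  have hmeas : ∀ k : ℤ, Measurable fun x : Eucl n =>
      {w : ℝ | (2:ℝ) ^ (k+1) ≤ |w|}.indicator (fun _ => (1:ℝ≥0∞)) (u x - a) := fun k =>
    (measurable_const.indicator (hset k)).comp (hu.sub measurable_const)
  have hterm : ∀ k : ℤ, ∫⁻ x in D, ENNReal.ofReal (((2:ℝ) ^ (k + 2)) ^ q) *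
        {w : ℝ | (2:ℝ) ^ (k+1) ≤ |w|}.indicator (fun _ => 1) (u x - a) ≤
      ENNReal.ofReal ((8 * C) ^ q * C) * fracEnergyTau n δ τ p D (trunc u a k) ^ s := by
    intro k
    have h2 : (0:ℝ) < 2 ^ k := by positivity
    have hEk : fracEnergyTau n δ τ p D (trunc u a k) < ⊤ :=
      lt_of_le_of_lt ((ENNReal.le_tsum k).trans (energy_trunc h.hp hu a)) hE
    have hL := level_bound h hC (H D hD hb _ (measurable_trunc hu a k) 0 (atInf_trunc ha k)) hEk
      (t := 2 ^ k / (2 * C)) (by positivity)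
    rw [lintegral_const_mul' _ _ ENNReal.ofReal_ne_top]
    have hI : ∫⁻ x in D, {w : ℝ | (2:ℝ) ^ (k+1) ≤ |w|}.indicator (fun _ => (1:ℝ≥0∞)) (u x - a) ≤
        volume (D ∩ {x | C * (2 ^ k / (2 * C)) < |trunc u a k x - 0|}) := by
      have e1 : ∀ x, {w : ℝ | (2:ℝ) ^ (k+1) ≤ |w|}.indicator (fun _ => (1:ℝ≥0∞)) (u x - a) =
          {x : Eucl n | (2:ℝ) ^ (k+1) ≤ |u x - a|}.indicator (fun _ => (1:ℝ≥0∞)) x := fun x => rfl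
      simp_rw [e1]
      rw [lintegral_indicator (hset' k), setLIntegral_const, one_mul,
        Measure.restrict_apply (hset' k), inter_comm]
      apply measure_mono
      rintro x ⟨hx, hx2⟩
      refine ⟨hx, ?_⟩
      change C * (2 ^ k / (2 * C)) < |phi k |u x - a| - 0|
      rw [phi_top k hx2, sub_zero, abs_of_pos h2]
      have : C * (2 ^ k / (2 * C)) = (2:ℝ) ^ k / 2 := by field_simp
      rw [this]; linarith
    refine (mul_le_mul' le_rfl hI).trans ?_
    have e2 : ((2:ℝ) ^ (k + 2)) ^ q = (8 * C) ^ q * (2 ^ k / (2 * C)) ^ q := by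
      rw [← Real.mul_rpow (by positivity) (by positivity)]
      congr 1
      rw [zpow_add₀ (by norm_num)]
      field_simp
      norm_num
    rw [e2, ENNReal.ofReal_mul (by positivity), mul_assoc, ENNReal.ofReal_mul (by positivity),
      mul_assoc]
    exact mul_le_mul' le_rfl hL
  calc _ ≤ ∫⁻ x in D, ∑' k : ℤ, ENNReal.ofReal (((2:ℝ) ^ (k + 2)) ^ q) *
        {w : ℝ | (2:ℝ) ^ (k+1) ≤ |w|}.indicator (fun _ => 1) (u x - a) :=
        lintegral_mono fun x => dyadic_bound hq0 _
    _ = ∑' k : ℤ, ∫⁻ x in D, ENNReal.ofReal (((2:ℝ) ^ (k + 2)) ^ q) *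
        {w : ℝ | (2:ℝ) ^ (k+1) ≤ |w|}.indicator (fun _ => 1) (u x - a) :=
        lintegral_tsum fun k => ((hmeas k).const_mul _).aemeasurable
    _ ≤ ∑' k : ℤ, ENNReal.ofReal ((8 * C) ^ q * C) *
          fracEnergyTau n δ τ p D (trunc u a k) ^ s := ENNReal.tsum_le_tsum hterm
    _ ≤ _ := by
        rw [ENNReal.tsum_mul_left]
        refine mul_le_mul' le_rfl ((tsum_rpow_le _ hs1).trans ?_)
        exact ENNReal.rpow_le_rpow (energy_trunc h.hp hu a) (by linarith)


/-- Fractional Sobolev–Poincaré inequality in unbounded John domains: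
for an unbounded `c`-John domain `D ⊆ ℝⁿ`, `n ≥ 2`, `τ, δ ∈ (0,1)`, `1 ≤ p < n/δ`,
there is `C = C(δ,τ,p,n,c) > 0` with
`inf_a ∫_D |u - a|^{np/(n-δp)} ≤ C (|u|_{W^{δ,p}_τ(D)}^p)^{n/(n-δp)}`
for every `u` in the homogeneous fractional Sobolev space `Ẇ^{δ,p}_τ(D)`. -/
theorem statement1 (n : ℕ) (hn : 2 ≤ n) (c : ℝ) (hc : 1 ≤ c)
    (τ δ p : ℝ) (hτ : τ ∈ Ioo (0:ℝ) 1) (hδ : δ ∈ Ioo (0:ℝ) 1)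
    (hp : 1 ≤ p) (hpn : p < n / δ) :
    ∃ C : ℝ, 0 < C ∧
      ∀ D : Set (Eucl n), IsJohnDomain n c D → ¬ Bornology.IsBounded D →
        ∀ u : Eucl n → ℝ, Measurable u → fracEnergyTau n δ τ p D u < ⊤ →
          (⨅ a : ℝ, ∫⁻ x in D, ENNReal.ofReal
              (|u x - a| ^ ((n:ℝ) * p / ((n:ℝ) - δ * p))) ∂volume)
            ≤ ENNReal.ofReal C * fracEnergyTau n δ τ p D u ^ ((n:ℝ) / ((n:ℝ) - δ * p)) := by
  have h : Hyp n c τ δ p := ⟨hn, hc, hτ.1, hτ.2, hδ.1, hδ.2, hp, by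
    rw [lt_div_iff₀ hδ.1] at hpn; linarith⟩
  exact sobolev h
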